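/- arXiv:1502.05594 — 2 statements merged into one kernel-verified Lean document; each statement's English description precedes it below -/
import Mathlib

section
/- Let $\alpha\in(-1,\infty)$, $p\in[1,\infty)$, $a\ge 0$, $r>0$, and let $\nu(dx)=x_1^\alpha\,dx$ on $\mathbb{R}^d_+$. For any $u\in C^\infty_{loc}(\overline{\mathbb{R}^d_+})$, $$\int_{B_r^+(a)}\int_{B_r^+(a)}|u(x)-u(y)|^p\,\nu(dx)\,\nu(dy)\le C\, r^p\,\nu(B_r^+(a))\int_{B_r^+(a)}|Du(x)|^p\,\nu(dx),$$ where $C=C(d,p,\alpha)$ and $B_r^+(a)=((a-r)^+, a+r)\times B'_r(0)$ intersected with $\{x_1>0\}$ in the first coordinate. -/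
open MeasureTheory

/-- The half ball `B_r^+(a) = ((a-r)⁺, a+r) × B'_r(0)` in `ℝ^d = ℝ × ℝ^{d-1}`,
centered at `(a, 0')`, intersected with `{x₁ > 0}`. -/
def halfBallAt (d : ℕ) (a r : ℝ) : Set (ℝ × EuclideanSpace ℝ (Fin (d - 1))) :=
  Set.Ioo (max (a - r) 0) (a + r) ×ˢ Metric.ball (0 : EuclideanSpace ℝ (Fin (d - 1))) r

/-!
For a product measure, moving from `x` to `y` one factor at a time bounds the oscillation
integral of `u` by the oscillation integrals of its slices, so it is enough to treat a weighted
interval and an unweighted convex set.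

On the interval, a power weight `w`, whatever the sign of the exponent, is quasiconcave: on one
side of any point `z` the weight is at most `w z`. Hence `κ (Iic z) * κ (Ici z)` is at most
`|I| * κ I * w z`, where `κ` has density `w` on `I`. By the fundamental theorem of calculus and
Jensen's inequality `|f x - f y|ᵖ` is at most `|I|ᵖ⁻¹` times the integral of `|f'|ᵖ` over `[x, y]`;
exchanging integrals, `|f' z|ᵖ` gets multiplied by the mass of the pairs `(x, y)` separated by `z`.

On a convex set, integrate `Du` along the segments `(1 - t) • x + t • y`. For `t ≥ 1/2` the change
of variables in `y` costs a factor of at most `2 ^ n`, and for `t ≤ 1/2` one exchanges `x` and `y`.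
-/

open Set Module
open scoped ENNReal

section Osc

variable {X Y T F : Type*} [MeasurableSpace X] [MeasurableSpace Y] [MeasurableSpace T]
  [NormedAddCommGroup F] {μ : Measure X} {ν : Measure Y} {τ : Measure T} {p : ℝ}

/-- The double integral `∬ ‖f x - f y‖ᵖ dμ(x) dμ(y)`, the quantity which a Poincaré inequality
bounds by the integral of `‖Df‖ᵖ`. The measure `μ` need not be normalised. -/
noncomputable def oscIntegral (μ : Measure X) (p : ℝ) (f : X → F) : ℝ≥0∞ :=
  ∫⁻ q, ‖f q.1 - f q.2‖ₑ ^ p ∂μ.prod μ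

lemma measurable_enorm_sub_rpow {f g : X → F} (hf : StronglyMeasurable f)
    (hg : StronglyMeasurable g) (p : ℝ) : Measurable fun x ↦ ‖f x - g x‖ₑ ^ p :=
  (hf.sub hg).enorm.pow_const p

lemma oscIntegral_withDensity [SFinite μ] {w : X → ℝ≥0∞} (hw : Measurable w) {f : X → F}
    (hf : StronglyMeasurable f) (p : ℝ) :
    oscIntegral (μ.withDensity w) p f =
      ∫⁻ x, ∫⁻ y, ‖f x - f y‖ₑ ^ p * w x * w y ∂μ ∂μ := by
  have hosc : Measurable fun q : X × X ↦ ‖f q.1 - f q.2‖ₑ ^ p :=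
    measurable_enorm_sub_rpow (hf.comp_measurable measurable_fst)
      (hf.comp_measurable measurable_snd) p
  rw [oscIntegral, prod_withDensity hw hw,
    lintegral_withDensity_eq_lintegral_mul _ (by fun_prop) hosc, lintegral_prod]
  · refine lintegral_congr fun x ↦ lintegral_congr fun y ↦ ?_
    simp only [Pi.mul_apply]
    ring
  · exact Measurable.aemeasurable (by fun_prop)

lemma oscIntegral_le_of_enorm_sub_rpow_le [SFinite μ] [SFinite τ] {s : Set X}
    (hs : ∀ᵐ x ∂μ, x ∈ s) {f : X → F} {C : ℝ≥0∞} {H : (X × X) × T → ℝ≥0∞} (hH : Measurable H)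
    (hf : ∀ x ∈ s, ∀ y ∈ s, ‖f x - f y‖ₑ ^ p ≤ C * ∫⁻ t, H ((x, y), t) ∂τ) :
    oscIntegral μ p f ≤ C * ∫⁻ t, ∫⁻ q, H (q, t) ∂μ.prod μ ∂τ := by
  calc oscIntegral μ p f ≤ ∫⁻ q, C * ∫⁻ t, H (q, t) ∂τ ∂μ.prod μ := by
        refine lintegral_mono_ae ?_
        filter_upwards [Measure.quasiMeasurePreserving_fst.ae hs,
          Measure.quasiMeasurePreserving_snd.ae hs] with q hq₁ hq₂
        exact hf q.1 hq₁ q.2 hq₂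
    _ = C * ∫⁻ t, ∫⁻ q, H (q, t) ∂μ.prod μ ∂τ := by
        rw [lintegral_const_mul _ hH.lintegral_prod_right',
          ← lintegral_prod _ hH.aemeasurable, lintegral_prod_symm' _ hH]

section Prod

variable [SFinite μ] [SFinite ν]

lemma lintegral_enorm_sub_rpow_fst {u : X × Y → F} (hu : StronglyMeasurable u) (p : ℝ) :
    ∫⁻ q, ‖u q.1 - u (q.2.1, q.1.2)‖ₑ ^ p ∂(μ.prod ν).prod (μ.prod ν) =
      ν univ * ∫⁻ y, oscIntegral μ p (fun x ↦ u (x, y)) ∂ν := by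
  have hg : Measurable fun q : (X × Y) × X ↦ ‖u q.1 - u (q.2, q.1.2)‖ₑ ^ p :=
    measurable_enorm_sub_rpow (hu.comp_measurable (by fun_prop))
      (hu.comp_measurable (by fun_prop)) p
  have hmarginal (z : X × Y) : ∫⁻ z', ‖u z - u (z'.1, z.2)‖ₑ ^ p ∂μ.prod ν =
      ν univ * ∫⁻ x, ‖u z - u (x, z.2)‖ₑ ^ p ∂μ := by
    rw [← lintegral_map (f := fun x ↦ ‖u z - u (x, z.2)‖ₑ ^ p)
      (hg.comp measurable_prodMk_left) measurable_fst,
      Measure.map_fst_prod, lintegral_smul_measure, smul_eq_mul]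
  rw [lintegral_prod]
  swap
  · exact (hg.comp (measurable_fst.prodMk measurable_snd.fst)).aemeasurable
  simp_rw [hmarginal]
  rw [lintegral_const_mul _ hg.lintegral_prod_right',
    lintegral_prod_symm' _ hg.lintegral_prod_right']
  congr with y
  have hslice : Measurable fun q : X × X ↦ ‖u (q.1, y) - u (q.2, y)‖ₑ ^ p :=
    hg.comp (f := fun q : X × X ↦ ((q.1, y), q.2)) (by fun_prop)
  exact (lintegral_prod _ hslice.aemeasurable).symm

lemma lintegral_enorm_sub_rpow_snd {u : X × Y → F} (hu : StronglyMeasurable u) (p : ℝ) :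
    ∫⁻ q, ‖u q.1 - u (q.1.1, q.2.2)‖ₑ ^ p ∂(μ.prod ν).prod (μ.prod ν) =
      μ univ * ∫⁻ x, oscIntegral ν p (fun y ↦ u (x, y)) ∂μ := by
  have hswap : MeasurePreserving (Prod.map Prod.swap Prod.swap)
      ((μ.prod ν).prod (μ.prod ν)) ((ν.prod μ).prod (ν.prod μ)) :=
    Measure.measurePreserving_swap.prod Measure.measurePreserving_swap
  have huswap : StronglyMeasurable (u ∘ Prod.swap) := hu.comp_measurable measurable_swap
  refine Eq.trans ?_ (lintegral_enorm_sub_rpow_fst huswap p)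
  have hg : Measurable fun q : (Y × X) × (Y × X) ↦
      ‖(u ∘ Prod.swap) q.1 - (u ∘ Prod.swap) (q.2.1, q.1.2)‖ₑ ^ p :=
    measurable_enorm_sub_rpow (huswap.comp_measurable measurable_fst)
      (huswap.comp_measurable (by fun_prop)) p
  exact hswap.lintegral_comp hg

theorem oscIntegral_prod_le {u : X × Y → F} (hu : StronglyMeasurable u) (hp : 1 ≤ p) :
    oscIntegral (μ.prod ν) p u ≤
      2 ^ (p - 1) * (ν univ * ∫⁻ y, oscIntegral μ p (fun x ↦ u (x, y)) ∂ν +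
        μ univ * ∫⁻ x, oscIntegral ν p (fun y ↦ u (x, y)) ∂μ) := by
  have hfst : Measurable fun q : (X × Y) × (X × Y) ↦ ‖u q.1 - u (q.2.1, q.1.2)‖ₑ ^ p :=
    measurable_enorm_sub_rpow (hu.comp_measurable measurable_fst)
      (hu.comp_measurable (by fun_prop)) p
  have htriangle (z z' : X × Y) : ‖u z - u z'‖ₑ ^ p ≤
      2 ^ (p - 1) * (‖u z - u (z'.1, z.2)‖ₑ ^ p + ‖u z' - u (z'.1, z.2)‖ₑ ^ p) := by
    refine (ENNReal.rpow_le_rpow ?_ (by linarith)).trans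
      (ENNReal.rpow_add_le_mul_rpow_add_rpow _ _ hp)
    rw [enorm_sub_rev (u z'), ← sub_add_sub_cancel (u z) (u (z'.1, z.2)) (u z')]
    exact enorm_add_le _ _
  calc oscIntegral (μ.prod ν) p u
      ≤ ∫⁻ q, 2 ^ (p - 1) * (‖u q.1 - u (q.2.1, q.1.2)‖ₑ ^ p +
          ‖u q.2 - u (q.2.1, q.1.2)‖ₑ ^ p) ∂(μ.prod ν).prod (μ.prod ν) :=
        lintegral_mono fun q ↦ htriangle q.1 q.2
    _ = 2 ^ (p - 1) * (∫⁻ q, ‖u q.1 - u (q.2.1, q.1.2)‖ₑ ^ p ∂(μ.prod ν).prod (μ.prod ν) +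
          ∫⁻ q, ‖u q.1 - u (q.1.1, q.2.2)‖ₑ ^ p ∂(μ.prod ν).prod (μ.prod ν)) := by
        rw [lintegral_const_mul' _ _ (ENNReal.rpow_ne_top_of_nonneg (by linarith)
          ENNReal.ofNat_ne_top), lintegral_add_left hfst]
        congr 2
        exact lintegral_prod_swap fun q : (X × Y) × (X × Y) ↦ ‖u q.1 - u (q.1.1, q.2.2)‖ₑ ^ p
    _ = _ := by
        rw [lintegral_enorm_sub_rpow_fst hu, lintegral_enorm_sub_rpow_snd hu]

end Prod

end Osc

lemma lintegral_rpow_le_measure_univ_rpow_mul {X : Type*} [MeasurableSpace X] (μ : Measure X)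
    {p : ℝ} (hp : 1 ≤ p) {f : X → ℝ≥0∞} (hf : AEMeasurable f μ) :
    (∫⁻ x, f x ∂μ) ^ p ≤ μ univ ^ (p - 1) * ∫⁻ x, f x ^ p ∂μ := by
  have hp0 : 0 < p := by linarith
  have h := eLpNorm'_le_eLpNorm'_mul_rpow_measure_univ zero_lt_one hp hf.aestronglyMeasurable
  simp only [eLpNorm', enorm_eq_self, ENNReal.rpow_one, div_one] at h
  refine (ENNReal.rpow_le_rpow h hp0.le).trans_eq ?_
  rw [ENNReal.mul_rpow_of_nonneg _ _ hp0.le, ← ENNReal.rpow_mul, ← ENNReal.rpow_mul,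
    one_div_mul_cancel hp0.ne', ENNReal.rpow_one, mul_comm, sub_mul, one_mul,
    one_div_mul_cancel hp0.ne']

section Interval

variable {F : Type*} [NormedAddCommGroup F] [NormedSpace ℝ F] {p : ℝ}

lemma enorm_sub_rpow_le_lintegral_deriv {f : ℝ → F} (hf : ContDiff ℝ 1 f) (hp : 1 ≤ p)
    (x y : ℝ) :
    ‖f x - f y‖ₑ ^ p ≤ edist x y ^ (p - 1) * ∫⁻ z in uIcc x y, ‖deriv f z‖ₑ ^ p := by
  wlog hxy : x ≤ y generalizing x y
  · rw [enorm_sub_rev, edist_comm, uIcc_comm]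
    exact this y x (le_of_not_ge hxy)
  rw [enorm_sub_rev, uIcc_of_le hxy]
  calc ‖f y - f x‖ₑ ^ p
      ≤ (∫⁻ z in Icc x y, ‖deriv f z‖ₑ) ^ p :=
        ENNReal.rpow_le_rpow
          (enorm_sub_le_lintegral_deriv_of_contDiffOn_Icc hf.contDiffOn hxy) (by linarith)
    _ ≤ volume.restrict (Icc x y) univ ^ (p - 1) * ∫⁻ z in Icc x y, ‖deriv f z‖ₑ ^ p :=
        lintegral_rpow_le_measure_univ_rpow_mul _ hp
          (hf.continuous_deriv le_rfl).enorm.aemeasurable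
    _ = edist x y ^ (p - 1) * ∫⁻ z in Icc x y, ‖deriv f z‖ₑ ^ p := by
        rw [Measure.restrict_apply_univ, Real.volume_Icc, edist_comm, edist_dist, Real.dist_eq,
          abs_of_nonneg (sub_nonneg.2 hxy)]

lemma withDensity_Iic_mul_withDensity_Ici_le {m : Measure ℝ} {s : Set ℝ} {w : ℝ → ℝ≥0∞}
    (hw : QuasiconcaveOn ℝ s w) (z : ℝ) :
    (m.restrict s).withDensity w (Iic z) * (m.restrict s).withDensity w (Ici z) ≤
      m s * (m.restrict s).withDensity w univ * w z := by
  set κ := (m.restrict s).withDensity w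
  have hbound {t : Set ℝ} (ht : MeasurableSet t) (hle : ∀ x ∈ t ∩ s, w x ≤ w z) :
      κ t ≤ m s * w z := by
    calc κ t = ∫⁻ x in t ∩ s, w x ∂m := by
          rw [withDensity_apply _ ht, Measure.restrict_restrict ht]
      _ ≤ ∫⁻ _ in t ∩ s, w z ∂m := setLIntegral_mono measurable_const hle
      _ ≤ ∫⁻ _ in s, w z ∂m := lintegral_mono_set inter_subset_right
      _ = m s * w z := by rw [setLIntegral_const, mul_comm]
  -- If both alternatives failed, `w` would dip below `min (w x) (w y)` at `z ∈ [x, y]`.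
  have hside : (∀ x ∈ Iic z ∩ s, w x ≤ w z) ∨ ∀ y ∈ Ici z ∩ s, w y ≤ w z := by
    by_contra! h
    obtain ⟨⟨x, ⟨hxz, hxs⟩, hx⟩, y, ⟨hzy, hys⟩, hy⟩ := h
    have hmem := (hw (min (w x) (w y))).ordConnected.out ⟨hxs, min_le_left _ _⟩
      ⟨hys, min_le_right _ _⟩ ⟨hxz, hzy⟩
    exact hmem.2.not_gt (lt_min hx hy)
  rcases hside with hleft | hright
  · calc κ (Iic z) * κ (Ici z) ≤ m s * w z * κ univ :=
          mul_le_mul' (hbound measurableSet_Iic hleft) (measure_mono (subset_univ _))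
      _ = m s * κ univ * w z := by ring
  · calc κ (Iic z) * κ (Ici z) ≤ κ univ * (m s * w z) :=
          mul_le_mul' (measure_mono (subset_univ _)) (hbound measurableSet_Ici hright)
      _ = m s * κ univ * w z := by ring

lemma prod_setOf_mem_uIcc_le (m : Measure ℝ) [SFinite m] (z : ℝ) :
    m.prod m {q | z ∈ uIcc q.1 q.2} ≤ 2 * (m (Iic z) * m (Ici z)) := by
  have hset : {q : ℝ × ℝ | z ∈ uIcc q.1 q.2} = Iic z ×ˢ Ici z ∪ Ici z ×ˢ Iic z := by
    ext q
    simp only [mem_uIcc, mem_ofPred_eq, mem_union, mem_prod, mem_Iic, mem_Ici, and_comm]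
  rw [hset]
  refine (measure_union_le _ _).trans_eq ?_
  rw [Measure.prod_prod, Measure.prod_prod]
  ring

lemma enorm_sub_rpow_le_setLIntegral_indicator_deriv {s : Set ℝ} (hs : OrdConnected s) {f : ℝ → F}
    (hf : ContDiff ℝ 1 f) (hp : 1 ≤ p) {x y : ℝ} (hx : x ∈ s) (hy : y ∈ s) :
    ‖f x - f y‖ₑ ^ p ≤ volume s ^ (p - 1) *
      ∫⁻ z in s, (uIcc x y).indicator (fun z ↦ ‖deriv f z‖ₑ ^ p) z := by
  have hsub : uIcc x y ⊆ s := hs.uIcc_subset hx hy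
  have hdist : edist x y ≤ volume s := by
    calc edist x y = volume (uIcc x y) := by
          rw [Real.volume_interval, edist_comm, edist_dist, Real.dist_eq]
      _ ≤ volume s := measure_mono hsub
  rw [setLIntegral_indicator measurableSet_uIcc, inter_eq_left.2 hsub]
  exact (enorm_sub_rpow_le_lintegral_deriv hf hp x y).trans
    (mul_le_mul_left (ENNReal.rpow_le_rpow hdist (by linarith)) _)

theorem oscIntegral_le_of_quasiconcaveOn {s : Set ℝ} {w : ℝ → ℝ≥0∞} (hw : QuasiconcaveOn ℝ s w)
    (hwm : Measurable w) {f : ℝ → F} (hf : ContDiff ℝ 1 f) (hp : 1 ≤ p) :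
    oscIntegral ((volume.restrict s).withDensity w) p f ≤
      2 * volume s ^ p * (volume.restrict s).withDensity w univ *
        ∫⁻ z, ‖deriv f z‖ₑ ^ p ∂(volume.restrict s).withDensity w := by
  have hs : OrdConnected s := hw.convex.ordConnected
  set κ := (volume.restrict s).withDensity w with hκ
  set k : ℝ → ℝ≥0∞ := fun z ↦ ‖deriv f z‖ₑ ^ p
  have hk : Measurable k := (hf.continuous_deriv le_rfl).enorm.measurable.pow_const p
  have hbetween : MeasurableSet {q : (ℝ × ℝ) × ℝ | q.2 ∈ uIcc q.1.1 q.1.2} :=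
    MeasurableSet.inter (s₁ := {q : (ℝ × ℝ) × ℝ | min q.1.1 q.1.2 ≤ q.2})
      (s₂ := {q : (ℝ × ℝ) × ℝ | q.2 ≤ max q.1.1 q.1.2})
      (measurableSet_le (by fun_prop) (by fun_prop))
      (measurableSet_le (by fun_prop) (by fun_prop))
  have hH : Measurable fun q : (ℝ × ℝ) × ℝ ↦ (uIcc q.1.1 q.1.2).indicator k q.2 :=
    (hk.comp measurable_snd).indicator hbetween
  have hslice (z : ℝ) : ∫⁻ q, (uIcc q.1 q.2).indicator k z ∂κ.prod κ ≤
      2 * (volume s * κ univ) * (w z * k z) := by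
    calc ∫⁻ q, (uIcc q.1 q.2).indicator k z ∂κ.prod κ
        = k z * κ.prod κ {q | z ∈ uIcc q.1 q.2} := by
          have hbetween_z : MeasurableSet {q : ℝ × ℝ | z ∈ uIcc q.1 q.2} :=
            measurable_prodMk_right hbetween
          rw [← setLIntegral_const, ← lintegral_indicator hbetween_z]
          rfl
      _ ≤ k z * (2 * (volume s * κ univ * w z)) := by
          gcongr
          exact (prod_setOf_mem_uIcc_le κ z).trans
            (mul_le_mul_right (withDensity_Iic_mul_withDensity_Ici_le hw z) 2)
      _ = 2 * (volume s * κ univ) * (w z * k z) := by ring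
  calc oscIntegral κ p f
      ≤ volume s ^ (p - 1) * ∫⁻ z in s, ∫⁻ q, (uIcc q.1 q.2).indicator k z ∂κ.prod κ :=
        oscIntegral_le_of_enorm_sub_rpow_le
          ((withDensity_absolutelyContinuous _ _).ae_le (ae_restrict_mem hs.measurableSet)) hH
          fun x hx y hy ↦ enorm_sub_rpow_le_setLIntegral_indicator_deriv hs hf hp hx hy
    _ ≤ volume s ^ (p - 1) * ∫⁻ z in s, 2 * (volume s * κ univ) * (w z * k z) := by
        gcongr with z
        exact hslice z
    _ = 2 * (volume s ^ (p - 1) * volume s) * κ univ * ∫⁻ z, k z ∂κ := by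
        rw [hκ, lintegral_withDensity_eq_lintegral_mul _ hwm hk,
          lintegral_const_mul _ (by fun_prop)]
        simp only [Pi.mul_apply]
        ring
    _ = 2 * volume s ^ p * κ univ * ∫⁻ z, k z ∂κ := by
        nth_rewrite 2 [← ENNReal.rpow_one (volume s)]
        rw [← ENNReal.rpow_add_of_nonneg _ _ (by linarith) zero_le_one, sub_add_cancel]

end Interval

section Convex

variable {E F : Type*} [NormedAddCommGroup E] [NormedSpace ℝ E] [NormedAddCommGroup F]
  [NormedSpace ℝ F] {p : ℝ}

lemma enorm_sub_rpow_le_lintegral_fderiv_segment {v : E → F} (hv : ContDiff ℝ 1 v) (hp : 1 ≤ p)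
    (x y : E) :
    ‖v x - v y‖ₑ ^ p ≤
      edist x y ^ p * ∫⁻ t in Icc (0 : ℝ) 1, ‖fderiv ℝ v ((1 - t) • x + t • y)‖ₑ ^ p := by
  have hline : ContDiff ℝ 1 fun t : ℝ ↦ v ((1 - t) • x + t • y) := by fun_prop
  have hderiv (t : ℝ) : ‖deriv (fun t : ℝ ↦ v ((1 - t) • x + t • y)) t‖ₑ ≤
      edist x y * ‖fderiv ℝ v ((1 - t) • x + t • y)‖ₑ := by
    have hlineMap := (AffineMap.hasDerivAt_lineMap (𝕜 := ℝ) (a := x) (b := y) (x := t))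
    have hchain := (hv.differentiable one_ne_zero _).hasFDerivAt.comp_hasDerivAt t hlineMap
    simp only [Function.comp_def, AffineMap.lineMap_apply_module] at hchain
    rw [hchain.deriv, edist_comm, edist_eq_enorm_sub, mul_comm]
    exact ContinuousLinearMap.le_opENorm _ _
  calc ‖v x - v y‖ₑ ^ p
      ≤ ∫⁻ t in Icc (0 : ℝ) 1, ‖deriv (fun t : ℝ ↦ v ((1 - t) • x + t • y)) t‖ₑ ^ p := by
        simpa [edist_comm] using enorm_sub_rpow_le_lintegral_deriv hline hp 0 1
    _ ≤ ∫⁻ t in Icc (0 : ℝ) 1, edist x y ^ p * ‖fderiv ℝ v ((1 - t) • x + t • y)‖ₑ ^ p := by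
        gcongr with t
        rw [← ENNReal.mul_rpow_of_nonneg _ _ (by linarith)]
        exact ENNReal.rpow_le_rpow (hderiv t) (by linarith)
    _ = _ := lintegral_const_mul' _ _ (ENNReal.rpow_ne_top_of_nonneg (by linarith)
        (edist_ne_top _ _))

variable [FiniteDimensional ℝ E] [MeasurableSpace E] [BorelSpace E]

lemma lintegral_comp_add_smul (μ : Measure E) [μ.IsAddHaarMeasure] {G : E → ℝ≥0∞}
    (hG : Measurable G) (c : E) {t : ℝ} (ht : 0 < t) :
    ∫⁻ x, G (c + t • x) ∂μ = ENNReal.ofReal (t⁻¹) ^ finrank ℝ E * ∫⁻ x, G x ∂μ := by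
  calc ∫⁻ x, G (c + t • x) ∂μ = ∫⁻ x, G (c + x) ∂μ.map (t • ·) := by
        rw [lintegral_map (by fun_prop) (by fun_prop)]
    _ = ENNReal.ofReal |(t ^ finrank ℝ E)⁻¹| * ∫⁻ x, G x ∂μ := by
        rw [Measure.map_addHaar_smul _ ht.ne', lintegral_smul_measure,
          lintegral_add_left_eq_self, smul_eq_mul]
    _ = ENNReal.ofReal (t⁻¹) ^ finrank ℝ E * ∫⁻ x, G x ∂μ := by
        rw [abs_of_pos (by positivity), ← inv_pow, ENNReal.ofReal_pow (by positivity)]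

lemma setLIntegral_comp_segment_le (μ : Measure E) [μ.IsAddHaarMeasure] {s : Set E}
    (hs : Convex ℝ s) (hsm : MeasurableSet s) {G : E → ℝ≥0∞} (hG : Measurable G) {x : E}
    (hx : x ∈ s) {t : ℝ} (ht : t ∈ Icc (1 / 2 : ℝ) 1) :
    ∫⁻ y in s, G ((1 - t) • x + t • y) ∂μ ≤ 2 ^ finrank ℝ E * ∫⁻ y in s, G y ∂μ := by
  have ht0 : 0 < t := by linarith [ht.1]
  calc ∫⁻ y in s, G ((1 - t) • x + t • y) ∂μ
      = ∫⁻ y in s, s.indicator G ((1 - t) • x + t • y) ∂μ :=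
        setLIntegral_congr_fun hsm fun y hy ↦ (indicator_of_mem
          (hs hx hy (by linarith [ht.2]) ht0.le (by ring)) G).symm
    _ ≤ ∫⁻ y, s.indicator G ((1 - t) • x + t • y) ∂μ := setLIntegral_le_lintegral _ _
    _ = ENNReal.ofReal (t⁻¹) ^ finrank ℝ E * ∫⁻ y in s, G y ∂μ := by
        rw [lintegral_comp_add_smul μ (hG.indicator hsm) _ ht0, lintegral_indicator hsm]
    _ ≤ 2 ^ finrank ℝ E * ∫⁻ y in s, G y ∂μ := by
        gcongr
        rw [← ENNReal.ofReal_ofNat]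
        exact ENNReal.ofReal_le_ofReal ((inv_le_comm₀ ht0 two_pos).2 (by linarith [ht.1]))

lemma lintegral_lintegral_comp_segment_le (μ : Measure E) [μ.IsAddHaarMeasure] {s : Set E}
    (hs : Convex ℝ s) (hsm : MeasurableSet s) {G : E → ℝ≥0∞} (hG : Measurable G) {t : ℝ}
    (ht : t ∈ Icc (0 : ℝ) 1) :
    ∫⁻ x in s, ∫⁻ y in s, G ((1 - t) • x + t • y) ∂μ ∂μ ≤
      2 ^ finrank ℝ E * μ s * ∫⁻ x in s, G x ∂μ := by
  wlog hhalf : 1 / 2 ≤ t generalizing t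
  · rw [lintegral_lintegral_swap (Measurable.aemeasurable (by fun_prop))]
    simpa only [sub_sub_cancel, add_comm] using
      this (t := 1 - t) ⟨by linarith [ht.2], by linarith [ht.1]⟩ (by linarith)
  calc ∫⁻ x in s, ∫⁻ y in s, G ((1 - t) • x + t • y) ∂μ ∂μ
      ≤ ∫⁻ _ in s, 2 ^ finrank ℝ E * ∫⁻ y in s, G y ∂μ ∂μ :=
        setLIntegral_mono measurable_const fun x hx ↦
          setLIntegral_comp_segment_le μ hs hsm hG hx ⟨hhalf, ht.2⟩
    _ = 2 ^ finrank ℝ E * μ s * ∫⁻ x in s, G x ∂μ := by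
        rw [setLIntegral_const]
        ring

theorem oscIntegral_le_of_convex (μ : Measure E) [μ.IsAddHaarMeasure] {s : Set E}
    (hs : Convex ℝ s) (hsm : MeasurableSet s) {v : E → F} (hv : ContDiff ℝ 1 v) (hp : 1 ≤ p) :
    oscIntegral (μ.restrict s) p v ≤
      2 ^ finrank ℝ E * Metric.ediam s ^ p * μ s * ∫⁻ x in s, ‖fderiv ℝ v x‖ₑ ^ p ∂μ := by
  set G : E → ℝ≥0∞ := fun x ↦ ‖fderiv ℝ v x‖ₑ ^ p
  have hG : Measurable G := (hv.continuous_fderiv one_ne_zero).enorm.measurable.pow_const p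
  have hpointwise : ∀ x ∈ s, ∀ y ∈ s, ‖v x - v y‖ₑ ^ p ≤
      Metric.ediam s ^ p * ∫⁻ t in Icc (0 : ℝ) 1, G ((1 - t) • x + t • y) := by
    intro x hx y hy
    exact (enorm_sub_rpow_le_lintegral_fderiv_segment hv hp x y).trans (mul_le_mul_left
      (ENNReal.rpow_le_rpow (Metric.edist_le_ediam_of_mem hx hy) (by linarith)) _)
  calc oscIntegral (μ.restrict s) p v
      ≤ Metric.ediam s ^ p * ∫⁻ t in Icc (0 : ℝ) 1,
          ∫⁻ q, G ((1 - t) • q.1 + t • q.2) ∂(μ.restrict s).prod (μ.restrict s) :=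
        oscIntegral_le_of_enorm_sub_rpow_le (ae_restrict_mem hsm)
          (H := fun q ↦ G ((1 - q.2) • q.1.1 + q.2 • q.1.2)) (by fun_prop) hpointwise
    _ ≤ Metric.ediam s ^ p * ∫⁻ _ in Icc (0 : ℝ) 1,
          2 ^ finrank ℝ E * μ s * ∫⁻ x in s, G x ∂μ := by
        gcongr 1
        refine setLIntegral_mono measurable_const fun t ht ↦ ?_
        rw [lintegral_prod _ (Measurable.aemeasurable (by fun_prop))]
        exact lintegral_lintegral_comp_segment_le μ hs hsm hG ht
    _ = 2 ^ finrank ℝ E * Metric.ediam s ^ p * μ s * ∫⁻ x in s, G x ∂μ := by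
        rw [setLIntegral_const, Real.volume_Icc, sub_zero, ENNReal.ofReal_one]
        ring

end Convex

section Product

variable {E F : Type*} [NormedAddCommGroup E] [NormedSpace ℝ E] [NormedAddCommGroup F]
  [NormedSpace ℝ F] {p : ℝ}

lemma enorm_deriv_prodMk_left_le {u : ℝ × E → F} {x : ℝ} {y : E}
    (hu : DifferentiableAt ℝ u (x, y)) :
    ‖deriv (fun x ↦ u (x, y)) x‖ₑ ≤ ‖fderiv ℝ u (x, y)‖ₑ := by
  have hslice := hu.hasFDerivAt.comp_hasDerivAt x ((hasDerivAt_id x).prodMk (hasDerivAt_const x y))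
  have hunit : ‖((1 : ℝ), (0 : E))‖ₑ = 1 := by
    rw [← ofReal_norm, Prod.norm_mk]
    simp
  rw [show deriv (fun x ↦ u (x, y)) x = _ from hslice.deriv]
  simpa only [hunit, mul_one] using (fderiv ℝ u (x, y)).le_opENorm (1, 0)

lemma enorm_fderiv_prodMk_right_le {E' : Type*} [NormedAddCommGroup E'] [NormedSpace ℝ E']
    {u : E' × E → F} {x : E'} {y : E} (hu : DifferentiableAt ℝ u (x, y)) :
    ‖fderiv ℝ (fun y ↦ u (x, y)) y‖ₑ ≤ ‖fderiv ℝ u (x, y)‖ₑ := by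
  have hslice := hu.hasFDerivAt.comp y (hasFDerivAt_prodMk_right x y)
  have hinr : ‖ContinuousLinearMap.inr ℝ E' E‖ₑ ≤ 1 := by
    rw [← ofReal_norm, ← ENNReal.ofReal_one]
    exact ENNReal.ofReal_le_ofReal (ContinuousLinearMap.norm_inr_le_one ℝ E' E)
  rw [show fderiv ℝ (fun y ↦ u (x, y)) y = _ from hslice.fderiv]
  exact (ContinuousLinearMap.opENorm_comp_le _ _).trans (mul_le_of_le_one_right' hinr)

variable [FiniteDimensional ℝ E] [MeasurableSpace E] [BorelSpace E]

theorem oscIntegral_prod_le_of_quasiconcaveOn_of_convex (μ : Measure E) [μ.IsAddHaarMeasure]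
    {I : Set ℝ} {w : ℝ → ℝ≥0∞} (hw : QuasiconcaveOn ℝ I w) (hwm : Measurable w) {s : Set E}
    (hs : Convex ℝ s) (hsm : MeasurableSet s) {D : ℝ≥0∞} (hI : volume I ≤ D)
    (hsD : Metric.ediam s ≤ D) {u : ℝ × E → F} (hu : ContDiff ℝ 1 u) (hp : 1 ≤ p) :
    oscIntegral (((volume.restrict I).withDensity w).prod (μ.restrict s)) p u ≤
      2 ^ (p - 1) * (2 + 2 ^ finrank ℝ E) * D ^ p *
        ((volume.restrict I).withDensity w).prod (μ.restrict s) univ *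
        ∫⁻ z, ‖fderiv ℝ u z‖ₑ ^ p ∂((volume.restrict I).withDensity w).prod (μ.restrict s) := by
  have hp0 : 0 ≤ p := by linarith
  set κ := (volume.restrict I).withDensity w
  set ν := μ.restrict s with hν
  set K : ℝ × E → ℝ≥0∞ := fun z ↦ ‖fderiv ℝ u z‖ₑ ^ p
  have hKm : Measurable K := (hu.continuous_fderiv one_ne_zero).enorm.measurable.pow_const p
  have hud : Differentiable ℝ u := hu.differentiable one_ne_zero
  have hfst (y : E) : oscIntegral κ p (fun x ↦ u (x, y)) ≤
      2 * D ^ p * κ univ * ∫⁻ x, K (x, y) ∂κ := by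
    refine (oscIntegral_le_of_quasiconcaveOn hw hwm (by fun_prop) hp).trans ?_
    gcongr with x
    exact ENNReal.rpow_le_rpow (enorm_deriv_prodMk_left_le (hud _)) hp0
  have hsnd (x : ℝ) : oscIntegral ν p (fun y ↦ u (x, y)) ≤
      2 ^ finrank ℝ E * D ^ p * ν univ * ∫⁻ y, K (x, y) ∂ν := by
    refine (oscIntegral_le_of_convex μ hs hsm (by fun_prop) hp).trans ?_
    rw [hν, Measure.restrict_apply_univ]
    gcongr with y
    exact ENNReal.rpow_le_rpow (enorm_fderiv_prodMk_right_le (hud _)) hp0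
  calc oscIntegral (κ.prod ν) p u
      ≤ 2 ^ (p - 1) * (ν univ * ∫⁻ y, oscIntegral κ p (fun x ↦ u (x, y)) ∂ν +
          κ univ * ∫⁻ x, oscIntegral ν p (fun y ↦ u (x, y)) ∂κ) :=
        oscIntegral_prod_le hu.continuous.stronglyMeasurable hp
    _ ≤ 2 ^ (p - 1) * (ν univ * ∫⁻ y, 2 * D ^ p * κ univ * ∫⁻ x, K (x, y) ∂κ ∂ν +
          κ univ * ∫⁻ x, 2 ^ finrank ℝ E * D ^ p * ν univ * ∫⁻ y, K (x, y) ∂ν ∂κ) := by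
        gcongr
        exacts [hfst _, hsnd _]
    _ = 2 ^ (p - 1) * (2 + 2 ^ finrank ℝ E) * D ^ p * κ.prod ν univ *
          ∫⁻ z, K z ∂κ.prod ν := by
        rw [lintegral_const_mul _ hKm.lintegral_prod_left',
          lintegral_const_mul _ hKm.lintegral_prod_right', ← lintegral_prod_symm' _ hKm,
          ← lintegral_prod _ hKm.aemeasurable, ← univ_prod_univ, Measure.prod_prod]
        ring

end Product

section RealWeight

variable {X F : Type*} [MeasurableSpace X] {m : Measure X} [NormedAddCommGroup F] {p : ℝ}
  {ρ : X → ℝ}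

lemma ofReal_norm_rpow_mul (hp : 0 ≤ p) (v : F) (c : ℝ) :
    ENNReal.ofReal (‖v‖ ^ p * c) = ‖v‖ₑ ^ p * ENNReal.ofReal c := by
  rw [ENNReal.ofReal_mul (by positivity), ← ENNReal.ofReal_rpow_of_nonneg (norm_nonneg v) hp,
    ofReal_norm]

lemma lintegral_enorm_rpow_withDensity_ofReal (hρ : Measurable ρ) {g : X → F}
    (hg : StronglyMeasurable g) (hp : 0 ≤ p) :
    ∫⁻ x, ‖g x‖ₑ ^ p ∂m.withDensity (fun x ↦ ENNReal.ofReal (ρ x)) =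
      ∫⁻ x, ENNReal.ofReal (‖g x‖ ^ p * ρ x) ∂m := by
  rw [lintegral_withDensity_eq_lintegral_mul _ (by fun_prop) (hg.enorm.pow_const p)]
  simp only [Pi.mul_apply, ofReal_norm_rpow_mul hp]
  simp only [mul_comm]

lemma oscIntegral_withDensity_ofReal [SFinite m] (hρ : Measurable ρ) (hρ0 : ∀ᵐ x ∂m, 0 ≤ ρ x)
    {f : X → F} (hf : StronglyMeasurable f) (hp : 0 ≤ p) :
    oscIntegral (m.withDensity fun x ↦ ENNReal.ofReal (ρ x)) p f =
      ∫⁻ x, ∫⁻ y, ENNReal.ofReal (‖f x - f y‖ ^ p * ρ x * ρ y) ∂m ∂m := by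
  rw [oscIntegral_withDensity (by fun_prop) hf]
  refine lintegral_congr_ae (hρ0.mono fun x hx ↦ lintegral_congr fun y ↦ ?_)
  rw [ENNReal.ofReal_mul (by positivity), ofReal_norm_rpow_mul hp]

end RealWeight

lemma quasiconcaveOn_ofReal_rpow (α : ℝ) :
    QuasiconcaveOn ℝ (Ioi 0) fun x : ℝ ↦ ENNReal.ofReal (x ^ α) := by
  rcases le_total 0 α with hα | hα
  · refine MonotoneOn.quasiconcaveOn (fun x hx _ _ hxy ↦ ENNReal.ofReal_le_ofReal ?_)
      (convex_Ioi 0)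
    exact Real.rpow_le_rpow (le_of_lt hx) hxy hα
  · refine AntitoneOn.quasiconcaveOn (fun x hx _ _ hxy ↦ ENNReal.ofReal_le_ofReal ?_)
      (convex_Ioi 0)
    exact Real.rpow_le_rpow_of_nonpos hx hxy hα

section HalfCylinder

variable {E F : Type*} [NormedAddCommGroup E] [NormedSpace ℝ E] [FiniteDimensional ℝ E]
  [MeasurableSpace E] [BorelSpace E] [NormedAddCommGroup F] [NormedSpace ℝ F]

theorem lintegral_norm_sub_rpow_mul_rpow_le (μ : Measure E) [μ.IsAddHaarMeasure] {I : Set ℝ}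
    (hI : Convex ℝ I) (hpos : I ⊆ Ioi 0) {s : Set E} (hs : Convex ℝ s) (hsm : MeasurableSet s)
    {D : ℝ≥0∞} (hID : volume I ≤ D) (hsD : Metric.ediam s ≤ D) (α : ℝ) {p : ℝ} (hp : 1 ≤ p)
    {u : ℝ × E → F} (hu : ContDiff ℝ 1 u) :
    (∫⁻ x in I ×ˢ s, ∫⁻ y in I ×ˢ s,
      ENNReal.ofReal (‖u x - u y‖ ^ p * x.1 ^ α * y.1 ^ α) ∂volume.prod μ ∂volume.prod μ) ≤
      2 ^ (p - 1) * (2 + 2 ^ finrank ℝ E) * D ^ p *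
        (∫⁻ x in I ×ˢ s, ENNReal.ofReal (x.1 ^ α) ∂volume.prod μ) *
        ∫⁻ x in I ×ˢ s, ENNReal.ofReal (‖fderiv ℝ u x‖ ^ p * x.1 ^ α) ∂volume.prod μ := by
  have hp0 : 0 ≤ p := by linarith
  have hprod : ((volume.restrict I).withDensity fun x ↦ ENNReal.ofReal (x ^ α)).prod
      (μ.restrict s) = ((volume.prod μ).restrict (I ×ˢ s)).withDensity
        fun z ↦ ENNReal.ofReal (z.1 ^ α) := by
    rw [prod_withDensity_left (by fun_prop), Measure.prod_restrict]
  have hnonneg : ∀ᵐ z ∂(volume.prod μ).restrict (I ×ˢ s), 0 ≤ z.1 ^ α :=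
    (ae_restrict_mem (hI.ordConnected.measurableSet.prod hsm)).mono fun z hz ↦
      Real.rpow_nonneg (le_of_lt (hpos hz.1)) α
  have hosc := oscIntegral_prod_le_of_quasiconcaveOn_of_convex μ
    (hI.quasiconcaveOn_restrict (quasiconcaveOn_ofReal_rpow α) hpos) (by fun_prop)
    hs hsm hID hsD hu hp
  rwa [hprod, oscIntegral_withDensity_ofReal (by fun_prop) hnonneg
    hu.continuous.stronglyMeasurable hp0, lintegral_enorm_rpow_withDensity_ofReal (by fun_prop)
    (hu.continuous_fderiv one_ne_zero).stronglyMeasurable hp0, withDensity_apply _ .univ,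
    Measure.restrict_univ] at hosc

/-- The set `((a - r)⁺, a + r) × B_r(c)`, which for `c = 0` in `ℝ^(d-1)` is `halfBallAt d a r`. -/
def halfCylinder (a r : ℝ) (c : E) : Set (ℝ × E) :=
  Ioo (max (a - r) 0) (a + r) ×ˢ Metric.ball c r

theorem stmt_1_general (μ : Measure E) [μ.IsAddHaarMeasure] {p : ℝ} (hp : 1 ≤ p) :
    ∃ C : ℝ, 0 < C ∧ ∀ (α a r : ℝ) (c : E), 0 < r → ∀ u : ℝ × E → F, ContDiff ℝ 1 u →
      (∫⁻ x in halfCylinder a r c, ∫⁻ y in halfCylinder a r c,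
        ENNReal.ofReal (‖u x - u y‖ ^ p * x.1 ^ α * y.1 ^ α) ∂volume.prod μ ∂volume.prod μ) ≤
        ENNReal.ofReal (C * r ^ p) *
          (∫⁻ x in halfCylinder a r c, ENNReal.ofReal (x.1 ^ α) ∂volume.prod μ) *
          ∫⁻ x in halfCylinder a r c,
            ENNReal.ofReal (‖fderiv ℝ u x‖ ^ p * x.1 ^ α) ∂volume.prod μ := by
  refine ⟨2 ^ (p - 1) * (2 + 2 ^ finrank ℝ E) * 2 ^ p, by positivity, ?_⟩
  intro α a r c hr u hu
  have hpos : Ioo (max (a - r) 0) (a + r) ⊆ Ioi 0 := fun x hx ↦ (le_max_right _ _).trans_lt hx.1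
  have hlength : volume (Ioo (max (a - r) 0) (a + r)) ≤ ENNReal.ofReal (2 * r) := by
    rw [Real.volume_Ioo]
    exact ENNReal.ofReal_le_ofReal (by linarith [le_max_left (a - r) 0])
  have hdiam : Metric.ediam (Metric.ball c r) ≤ ENNReal.ofReal (2 * r) := by
    rw [ENNReal.ofReal_mul zero_le_two, ENNReal.ofReal_ofNat, ← Metric.eball_ofReal]
    exact Metric.ediam_eball_le
  have hconst : ENNReal.ofReal (2 ^ (p - 1) * (2 + 2 ^ finrank ℝ E) * 2 ^ p * r ^ p) =
      2 ^ (p - 1) * (2 + 2 ^ finrank ℝ E) * ENNReal.ofReal (2 * r) ^ p := by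
    rw [mul_assoc _ ((2 : ℝ) ^ p), ← Real.mul_rpow two_pos.le hr.le,
      ENNReal.ofReal_mul (by positivity), ENNReal.ofReal_mul (by positivity),
      ENNReal.ofReal_add two_pos.le (by positivity), ENNReal.ofReal_pow two_pos.le,
      ← ENNReal.ofReal_rpow_of_pos two_pos, ENNReal.ofReal_ofNat,
      ← ENNReal.ofReal_rpow_of_nonneg (by positivity) (by linarith)]
  rw [hconst]
  exact lintegral_norm_sub_rpow_mul_rpow_le μ (convex_Ioo _ _) hpos (convex_ball c r)
    measurableSet_ball hlength hdiam α hp hu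

end HalfCylinder

/-- Weighted Poincaré inequality on half balls: for `α ∈ (-1,∞)`, `p ∈ [1,∞)`,
`ν(dx) = x₁^α dx`, and any smooth `u`,
`∫∫_{B_r^+(a)²} |u(x)-u(y)|^p ν(dx)ν(dy) ≤ C r^p ν(B_r^+(a)) ∫_{B_r^+(a)} |Du|^p ν(dx)`,
with `C = C(d,p,α)`. -/
theorem stmt_1 (d : ℕ) (hd : 1 ≤ d) (α p : ℝ) (hα : -1 < α) (hp : 1 ≤ p) :
    ∃ C : ℝ, 0 < C ∧ ∀ (a r : ℝ), 0 ≤ a → 0 < r →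
      ∀ (u : ℝ × EuclideanSpace ℝ (Fin (d - 1)) → ℝ), ContDiff ℝ (⊤ : ℕ∞) u →
        (∫⁻ x in halfBallAt d a r, ∫⁻ y in halfBallAt d a r,
            ENNReal.ofReal (|u x - u y| ^ p * x.1 ^ α * y.1 ^ α)) ≤
          ENNReal.ofReal (C * r ^ p) *
            (∫⁻ x in halfBallAt d a r, ENNReal.ofReal (x.1 ^ α)) *
            ∫⁻ x in halfBallAt d a r, ENNReal.ofReal (‖fderiv ℝ u x‖ ^ p * x.1 ^ α) := by
  obtain ⟨C, hC, h⟩ :=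
    stmt_1_general (F := ℝ) (volume : Measure (EuclideanSpace ℝ (Fin (d - 1)))) hp
  exact ⟨C, hC, fun a r _ hr u hu ↦ h α a r 0 hr u (hu.of_le (by exact_mod_cast le_top))⟩
end

section
/- Let $p\in(1,\infty)$, $\theta\in\mathbb{R}$, $\lambda>0$, and let $\|\cdot\|_{p,\theta}$ denote the norm of $L_p$ on $\mathbb{R}^{d+1}_+$ with measure $\mu(dx\,dt)=x_1^{\theta-d}\,dx\,dt$. Then for any $u$ with $u, Du, D^2u$ in this weighted $L_p$ space, $$\sqrt{\lambda}\,\|Du\|_{p,\theta}\le C\,\|D^2u\|_{p,\theta}+C\,\lambda\,\|u\|_{p,\theta},$$ where $C=C(d,p,\theta)$. -/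
open MeasureTheory

noncomputable section

variable (d : ℕ)

/-- The half space `{(t,x) : x₁ > 0}` in `ℝ^{d+1} = ℝ × ℝ × ℝ^{d-1}`. -/
def hSp : Set (ℝ × ℝ × EuclideanSpace ℝ (Fin (d - 1))) := {z | 0 < z.2.1}

/-- The weighted `L_p` "norm" `(∫ g^p x₁^{θ-d} dx dt)^{1/p}` on `ℝ^{d+1}_+`
of a nonnegative quantity `g`. -/
def wNorm (p θ : ℝ) (g : ℝ × ℝ × EuclideanSpace ℝ (Fin (d - 1)) → ℝ) : ENNReal :=
  (∫⁻ z in hSp d, ENNReal.ofReal (g z ^ p * z.2.1 ^ (θ - (d : ℝ)))) ^ (1 / p)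

/-- Spatial gradient of `u(t,·)`. -/
def sGrad (u : ℝ × ℝ × EuclideanSpace ℝ (Fin (d - 1)) → ℝ)
    (z : ℝ × ℝ × EuclideanSpace ℝ (Fin (d - 1))) :=
  fderiv ℝ (fun x : ℝ × EuclideanSpace ℝ (Fin (d - 1)) => u (z.1, x)) z.2

/-- Spatial Hessian of `u(t,·)`. -/
def sHess (u : ℝ × ℝ × EuclideanSpace ℝ (Fin (d - 1)) → ℝ)
    (z : ℝ × ℝ × EuclideanSpace ℝ (Fin (d - 1))) :=
  fderiv ℝ (fun x : ℝ × EuclideanSpace ℝ (Fin (d - 1)) =>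
    fderiv ℝ (fun y : ℝ × EuclideanSpace ℝ (Fin (d - 1)) => u (z.1, y)) x) z.2

/-!
On a half line, the mean value inequality for `r ↦ g r - r • g' x` bounds `|g' x|` by averages of
`|g|` and `|g''|` over a window of length `2h` with endpoint `x`. By the Schur test, window averages
are bounded on `L_p(x ^ α dx)` as soon as the weighted measure of the reflected window at `y` is
at most a multiple of `h y ^ α`. For `α > -1` this holds for windows pointing away from `0`. For
`α ≤ -1` it holds for windows pointing towards `0`; those that reach `0` are harmless because the
weight has infinite mass there, so that `g' ∈ L_p` has lower limit zero in norm at `0` and `g' x` is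
controlled by the integral of `g''` alone.

On the half space, the spatial gradient is controlled by finitely many derivatives along directions
`(1, w)` transversal to the boundary. A shear turns these into half lines, and integrating the
one-dimensional bound with `h = 1 / √λ` over all of them gives the claim.
-/

open Set ENNReal
open scoped NNReal

section LpNorm

variable {X Y F : Type*} [MeasurableSpace X] [MeasurableSpace Y] [NormedAddCommGroup F]
  {p : ℝ≥0∞} {μ : Measure X}

theorem eLpNorm_le_mul_add_mul_of_ae_enorm_le {ε ε₁ ε₂ : Type*} [ENorm ε] [TopologicalSpace ε₁]
    [ContinuousENorm ε₁] [TopologicalSpace ε₂] [ContinuousENorm ε₂] {f : X → ε} {u : X → ε₁}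
    {v : X → ε₂} (hp : 1 ≤ p) (hu : AEStronglyMeasurable u μ) (hv : AEStronglyMeasurable v μ)
    {a b : ℝ≥0∞} (h : ∀ᵐ x ∂μ, ‖f x‖ₑ ≤ a * ‖u x‖ₑ + b * ‖v x‖ₑ) :
    eLpNorm f p μ ≤ a * eLpNorm u p μ + b * eLpNorm v p μ := by
  have hau : AEMeasurable (fun x => a * ‖u x‖ₑ) μ := hu.enorm.const_mul a
  have hbv : AEMeasurable (fun x => b * ‖v x‖ₑ) μ := hv.enorm.const_mul b
  calc eLpNorm f p μ ≤ eLpNorm (fun x => a * ‖u x‖ₑ + b * ‖v x‖ₑ) p μ := eLpNorm_mono_enorm_ae h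
    _ ≤ eLpNorm (fun x => a * ‖u x‖ₑ) p μ + eLpNorm (fun x => b * ‖v x‖ₑ) p μ :=
        eLpNorm_add_le hau.aestronglyMeasurable hbv.aestronglyMeasurable hp
    _ ≤ a * eLpNorm u p μ + b * eLpNorm v p μ := by
        gcongr
        exacts [eLpNorm_le_mul_eLpNorm_of_ae_le_mul'' p hu (.of_forall fun _ => le_rfl),
          eLpNorm_le_mul_eLpNorm_of_ae_le_mul'' p hv (.of_forall fun _ => le_rfl)]

theorem eLpNorm_le_mul_sum_of_ae_enorm_le {ι ε ε₁ : Type*} [ENorm ε] [TopologicalSpace ε₁]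
    [ContinuousENorm ε₁] {f : X → ε} {u : ι → X → ε₁} {s : Finset ι} (hp : 1 ≤ p)
    (hu : ∀ i ∈ s, AEStronglyMeasurable (u i) μ) {a : ℝ≥0∞}
    (h : ∀ᵐ x ∂μ, ‖f x‖ₑ ≤ a * ∑ i ∈ s, ‖u i x‖ₑ) :
    eLpNorm f p μ ≤ a * ∑ i ∈ s, eLpNorm (u i) p μ := by
  have hu_enorm : ∀ i ∈ s, AEStronglyMeasurable (fun x => ‖u i x‖ₑ) μ :=
    fun i hi => (hu i hi).enorm.aestronglyMeasurable
  have hsum_meas := Finset.aestronglyMeasurable_fun_sum s hu_enorm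
  calc eLpNorm f p μ ≤ eLpNorm (fun x => a * ∑ i ∈ s, ‖u i x‖ₑ) p μ := eLpNorm_mono_enorm_ae h
    _ ≤ a * eLpNorm (fun x => ∑ i ∈ s, ‖u i x‖ₑ) p μ :=
        eLpNorm_le_mul_eLpNorm_of_ae_le_mul'' p hsum_meas (.of_forall fun _ => le_rfl)
    _ ≤ a * ∑ i ∈ s, eLpNorm (u i) p μ := by
        gcongr
        simpa only [eLpNorm_enorm, Finset.sum_fn] using eLpNorm_sum_le hu_enorm hp

theorem eLpNorm_prod {ν : Measure Y} [SFinite ν] (hp : p ≠ 0) (hp_top : p ≠ ∞) {f : X × Y → F}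
    (hf : AEStronglyMeasurable f (μ.prod ν)) :
    eLpNorm f p (μ.prod ν) = eLpNorm (fun x => eLpNorm (fun y => f (x, y)) p ν) p μ := by
  have hq : p.toReal ≠ 0 := (toReal_pos hp hp_top).ne'
  simp only [eLpNorm_eq_lintegral_rpow_enorm_toReal hp hp_top, enorm_eq_self, one_div,
    rpow_inv_rpow hq]
  rw [lintegral_prod _ (hf.enorm.pow_const _)]

theorem aemeasurable_eLpNorm_prodMk_left {ν : Measure Y} [SFinite ν] (hp : p ≠ 0) (hp_top : p ≠ ∞)
    {f : X × Y → F} (hf : AEStronglyMeasurable f (μ.prod ν)) :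
    AEMeasurable (fun x => eLpNorm (fun y => f (x, y)) p ν) μ := by
  simp only [eLpNorm_eq_lintegral_rpow_enorm_toReal hp hp_top]
  exact (hf.enorm.pow_const _).lintegral_prod_right'.pow_const _

theorem ae_eLpNorm_prodMk_left_ne_top {ν : Measure Y} [SFinite ν] (hp : p ≠ 0) (hp_top : p ≠ ∞)
    {f : X × Y → F} (hf : AEStronglyMeasurable f (μ.prod ν)) (hfin : eLpNorm f p (μ.prod ν) ≠ ∞) :
    ∀ᵐ x ∂μ, eLpNorm (fun y => f (x, y)) p ν ≠ ∞ := by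
  have hq : 0 < p.toReal := toReal_pos hp hp_top
  rw [eLpNorm_prod hp hp_top hf, ← lt_top_iff_ne_top] at hfin
  have hmeas := (aemeasurable_eLpNorm_prodMk_left hp hp_top hf).enorm.pow_const p.toReal
  have hlint := lintegral_rpow_enorm_lt_top_of_eLpNorm_lt_top hp hp_top hfin
  filter_upwards [ae_lt_top' hmeas hlint.ne] with x hx htop
  simp [htop, top_rpow_of_pos hq] at hx

end LpNorm

section SchurTest

variable {X Y : Type*} [MeasurableSpace X] [MeasurableSpace Y]

theorem rpow_lintegral_le_measure_univ_rpow_mul (μ : Measure X) {p : ℝ} (hp : 1 ≤ p)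
    {f : X → ℝ≥0∞} (hf : AEMeasurable f μ) :
    (∫⁻ x, f x ∂μ) ^ p ≤ μ univ ^ (p - 1) * ∫⁻ x, f x ^ p ∂μ := by
  have hp0 : 0 < p := by positivity
  have hHolder := eLpNorm'_le_eLpNorm'_mul_rpow_measure_univ (μ := μ) one_pos hp
    hf.aestronglyMeasurable
  simp only [eLpNorm', enorm_eq_self, rpow_one, div_one] at hHolder
  calc (∫⁻ x, f x ∂μ) ^ p
      ≤ ((∫⁻ x, f x ^ p ∂μ) ^ (1 / p) * μ univ ^ (1 - 1 / p)) ^ p := by gcongr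
    _ = μ univ ^ (p - 1) * ∫⁻ x, f x ^ p ∂μ := by
      rw [mul_rpow_of_nonneg _ _ hp0.le, ← rpow_mul, ← rpow_mul, one_div_mul_cancel hp0.ne',
        rpow_one, sub_mul, one_mul, one_div_mul_cancel hp0.ne', mul_comm]

variable {μ : Measure X} {ν : Measure Y} [SFinite ν] {S : Set (X × Y)} {f : Y → ℝ≥0∞}

theorem aemeasurable_setLIntegral_section (hS : MeasurableSet S) (hf : AEMeasurable f ν) :
    AEMeasurable (fun x => ∫⁻ y in {y | (x, y) ∈ S}, f y ∂ν) μ := by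
  have hSx : ∀ x, MeasurableSet {y | (x, y) ∈ S} := fun x => measurable_prodMk_left hS
  simp_rw [← fun x => lintegral_indicator (μ := ν) (hSx x) f]
  exact (hf.comp_snd.indicator hS).lintegral_prod_right'

variable [SFinite μ]

theorem lintegral_rpow_setLIntegral_le {p : ℝ} (hp : 1 ≤ p) (hS : MeasurableSet S)
    (hf : AEMeasurable f ν) {M : ℝ≥0∞} (hM : ∀ x, ν {y | (x, y) ∈ S} ≤ M) :
    ∫⁻ x, (∫⁻ y in {y | (x, y) ∈ S}, f y ∂ν) ^ p ∂μ ≤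
      M ^ (p - 1) * ∫⁻ y, f y ^ p * μ {x | (x, y) ∈ S} ∂ν := by
  have hF : AEMeasurable (S.indicator fun z => f z.2 ^ p) (μ.prod ν) :=
    ((hf.pow_const p).comp_snd (μ := μ)).indicator hS
  calc ∫⁻ x, (∫⁻ y in {y | (x, y) ∈ S}, f y ∂ν) ^ p ∂μ
      ≤ ∫⁻ x, M ^ (p - 1) * ∫⁻ y, S.indicator (fun z => f z.2 ^ p) (x, y) ∂ν ∂μ := by
        refine lintegral_mono fun x => ?_
        have hSx : MeasurableSet {y | (x, y) ∈ S} := measurable_prodMk_left hS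
        refine (rpow_lintegral_le_measure_univ_rpow_mul _ hp hf.restrict).trans ?_
        rw [Measure.restrict_apply_univ, ← lintegral_indicator hSx]
        gcongr
        · exact hM x
        · rfl
    _ = M ^ (p - 1) * ∫⁻ y, ∫⁻ x, S.indicator (fun z => f z.2 ^ p) (x, y) ∂μ ∂ν := by
        rw [lintegral_const_mul'' _ hF.lintegral_prod_right',
          lintegral_lintegral_swap (f := fun x y => S.indicator (fun z => f z.2 ^ p) (x, y)) hF]
    _ = M ^ (p - 1) * ∫⁻ y, f y ^ p * μ {x | (x, y) ∈ S} ∂ν := by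
        congr 1
        refine lintegral_congr fun y => ?_
        have hSy : MeasurableSet {x | (x, y) ∈ S} := measurable_prodMk_right hS
        rw [← setLIntegral_const, ← lintegral_indicator hSy]
        rfl

theorem eLpNorm_setLIntegral_le {p : ℝ≥0∞} (hp : 1 ≤ p) (hp_top : p ≠ ∞) (hS : MeasurableSet S)
    (hf : AEMeasurable f ν) {w : Y → ℝ≥0∞} (hw : AEMeasurable w ν) {M : ℝ≥0∞}
    (hν : ∀ x, ν {y | (x, y) ∈ S} ≤ M) (hμ : ∀ᵐ y ∂ν, μ {x | (x, y) ∈ S} ≤ M * w y) :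
    eLpNorm (fun x => ∫⁻ y in {y | (x, y) ∈ S}, f y ∂ν) p μ ≤
      M * eLpNorm f p (ν.withDensity w) := by
  have hp0 : p ≠ 0 := (one_pos.trans_le hp).ne'
  have hp1 : 1 ≤ p.toReal := by simpa using toReal_mono hp_top hp
  rw [eLpNorm_eq_lintegral_rpow_enorm_toReal hp0 hp_top,
    eLpNorm_eq_lintegral_rpow_enorm_toReal hp0 hp_top]
  simp only [enorm_eq_self]
  set q := p.toReal
  have hq : 0 < q := one_pos.trans_le hp1
  rw [one_div, rpow_inv_le_iff hq, mul_rpow_of_nonneg _ _ hq.le, rpow_inv_rpow hq.ne',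
    lintegral_withDensity_eq_lintegral_mul₀ hw (hf.pow_const q)]
  calc ∫⁻ x, (∫⁻ y in {y | (x, y) ∈ S}, f y ∂ν) ^ q ∂μ
      ≤ M ^ (q - 1) * ∫⁻ y, f y ^ q * μ {x | (x, y) ∈ S} ∂ν :=
        lintegral_rpow_setLIntegral_le hp1 hS hf hν
    _ ≤ M ^ (q - 1) * ∫⁻ y, M * (w y * f y ^ q) ∂ν := by
        refine mul_le_mul_right (lintegral_mono_ae (hμ.mono fun y hy => ?_)) _
        calc f y ^ q * μ {x | (x, y) ∈ S} ≤ f y ^ q * (M * w y) := by gcongr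
          _ = M * (w y * f y ^ q) := by ring
    _ = M ^ q * ∫⁻ y, w y * f y ^ q ∂ν := by
        have hM : M ^ (q - 1) * M = M ^ q := by
          simpa using (rpow_add_of_nonneg (x := M) (q - 1) 1 (sub_nonneg.2 hp1) zero_le_one).symm
        rw [lintegral_const_mul'' (f := fun y => w y * f y ^ q) M (hw.mul (hf.pow_const q)),
          ← mul_assoc, hM]

end SchurTest

section PowerWeight

/-- The measure `x ^ α dx` on the half line `(0, ∞)`, as a measure on `ℝ`. -/
def rpowMeasure (α : ℝ) : Measure ℝ :=
  (volume.restrict (Ioi 0)).withDensity fun x => ENNReal.ofReal (x ^ α)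

instance (α : ℝ) : SFinite (rpowMeasure α) := by
  unfold rpowMeasure
  infer_instance

variable {α : ℝ}

theorem rpowMeasure_absolutelyContinuous : rpowMeasure α ≪ volume.restrict (Ioi 0) :=
  withDensity_absolutelyContinuous _ _

theorem ae_rpowMeasure_pos : ∀ᵐ x ∂rpowMeasure α, 0 < x :=
  rpowMeasure_absolutelyContinuous.ae_le (ae_restrict_mem measurableSet_Ioi)

theorem rpowMeasure_apply {s : Set ℝ} (hs : MeasurableSet s) :
    rpowMeasure α s = ∫⁻ x in s ∩ Ioi 0, ENNReal.ofReal (x ^ α) := by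
  rw [rpowMeasure, withDensity_apply _ hs, Measure.restrict_restrict hs]

theorem rpowMeasure_le_mul_volume {s : Set ℝ} (hs : MeasurableSet s) {c : ℝ}
    (hc : ∀ x ∈ s, 0 < x → x ^ α ≤ c) :
    rpowMeasure α s ≤ ENNReal.ofReal c * volume s := by
  calc rpowMeasure α s ≤ ∫⁻ _ in s ∩ Ioi 0, ENNReal.ofReal c := by
        rw [rpowMeasure_apply hs]
        exact setLIntegral_mono' (hs.inter measurableSet_Ioi) fun x hx =>
          ofReal_le_ofReal (hc x hx.1 hx.2)
    _ ≤ ENNReal.ofReal c * volume s := by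
        rw [setLIntegral_const]
        gcongr
        exact inter_subset_left

theorem rpowMeasure_Icc_right_le (hα : α ≤ 0) {ℓ y : ℝ} (hy : 0 < y) :
    rpowMeasure α (Icc y (y + ℓ)) ≤ ENNReal.ofReal ℓ * ENNReal.ofReal (y ^ α) := by
  refine (rpowMeasure_le_mul_volume measurableSet_Icc fun x hx _ =>
    Real.rpow_le_rpow_of_nonpos hy hx.1 hα).trans_eq ?_
  rw [Real.volume_Icc, add_sub_cancel_left, mul_comm]

theorem integral_rpow_le_mul_of_nonpos (hα : -1 < α) (hα0 : α ≤ 0) {m y : ℝ} (hm : 0 ≤ m)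
    (hmy : m ≤ y) : ∫ x in m..y, x ^ α ≤ (α + 1)⁻¹ * (y - m) * y ^ α := by
  have hα1 : 0 < α + 1 := by linarith
  have hm_rpow : y ^ α * m ≤ m ^ α * m := by
    rcases hm.eq_or_lt with rfl | hm
    · simp
    · gcongr ?_ * m
      exact Real.rpow_le_rpow_of_nonpos hm hmy hα0
  rw [integral_rpow (.inl hα), Real.rpow_add_one' (hm.trans hmy) hα1.ne',
    Real.rpow_add_one' hm hα1.ne', div_eq_inv_mul, mul_assoc]
  gcongr
  linarith

theorem rpowMeasure_Icc_left_le (hα : -1 < α) {ℓ y : ℝ} (hℓ : 0 ≤ ℓ) (hy : 0 < y) :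
    rpowMeasure α (Icc (y - ℓ) y) ≤
      ENNReal.ofReal (max 1 (α + 1)⁻¹ * ℓ) * ENNReal.ofReal (y ^ α) := by
  rcases le_total 0 α with hα0 | hα0
  · refine (rpowMeasure_le_mul_volume measurableSet_Icc fun x hx hx0 =>
      Real.rpow_le_rpow hx0.le hx.2 hα0).trans ?_
    rw [Real.volume_Icc, sub_sub_self, mul_comm]
    gcongr
    exact le_mul_of_one_le_left hℓ (le_max_left _ _)
  · set m := max 0 (y - ℓ)
    have hm : 0 ≤ m := le_max_left _ _
    have hmy : m ≤ y := max_le hy.le (by linarith)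
    have hint : IntegrableOn (fun x : ℝ => x ^ α) (Ioc m y) :=
      (intervalIntegrable_iff_integrableOn_Ioc_of_le hmy).1
        (intervalIntegral.intervalIntegrable_rpow' hα)
    calc rpowMeasure α (Icc (y - ℓ) y) ≤ ∫⁻ x in Icc m y, ENNReal.ofReal (x ^ α) := by
          rw [rpowMeasure_apply measurableSet_Icc]
          exact lintegral_mono_set fun x hx => ⟨max_le (le_of_lt hx.2) hx.1.1, hx.1.2⟩
      _ = ENNReal.ofReal (∫ x in m..y, x ^ α) := by
          rw [intervalIntegral.integral_of_le hmy, ofReal_integral_eq_lintegral_ofReal hint,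
            restrict_Ioc_eq_restrict_Icc]
          exact ae_restrict_of_forall_mem measurableSet_Ioc fun x hx =>
            Real.rpow_nonneg (hm.trans hx.1.le) α
      _ ≤ ENNReal.ofReal (max 1 (α + 1)⁻¹ * ℓ * y ^ α) := by
          refine ofReal_le_ofReal ((integral_rpow_le_mul_of_nonpos hα hα0 hm hmy).trans ?_)
          gcongr
          · exact le_max_right _ _
          · linarith [le_max_right 0 (y - ℓ)]
      _ = _ := ofReal_mul (by positivity)

theorem rpowMeasure_Ioo_zero_eq_top (hα : α ≤ -1) {x : ℝ} (hx : 0 < x) :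
    rpowMeasure α (Ioo 0 x) = ∞ := by
  by_contra hfin
  rw [rpowMeasure_apply measurableSet_Ioo, inter_eq_left.2 Ioo_subset_Ioi_self] at hfin
  have hint : IntegrableOn (fun r : ℝ => r ^ α) (Ioo 0 x) := by
    refine ⟨by fun_prop, (hasFiniteIntegral_iff_ofReal ?_).2 (lt_top_iff_ne_top.2 hfin)⟩
    exact ae_restrict_of_forall_mem measurableSet_Ioo fun r hr => Real.rpow_nonneg hr.1.le α
  exact hα.not_gt ((intervalIntegral.integrableOn_Ioo_rpow_iff hx).1 hint)

end PowerWeight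

section HalfLine

variable {F : Type*} [NormedAddCommGroup F] [NormedSpace ℝ F]

theorem enorm_sub_le_setLIntegral_deriv {f : ℝ → F} {a b x y : ℝ}
    (hf : ContDiffOn ℝ 1 f (Icc a b)) (hx : x ∈ Icc a b) (hy : y ∈ Icc a b) :
    ‖f x - f y‖ₑ ≤ ∫⁻ r in Icc a b, ‖deriv f r‖ₑ := by
  wlog hyx : y ≤ x generalizing x y
  · rw [enorm_sub_rev]
    exact this hy hx (le_of_not_ge hyx)
  have hsub : Icc y x ⊆ Icc a b := Icc_subset_Icc hy.1 hx.2
  exact (enorm_sub_le_lintegral_deriv_of_contDiffOn_Icc (hf.mono hsub) hyx).trans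
    (lintegral_mono_set hsub)

variable {g : ℝ → F} {s : Set ℝ} {a h : ℝ}

-- The mean value inequality for `r ↦ g r - r • deriv g x` on `[y, y + h]`.
theorem ofReal_mul_enorm_deriv_le {b x y : ℝ} (hs : IsOpen s) (hg : ContDiffOn ℝ 2 g s)
    (hsub : Icc a b ⊆ s) (hh : 0 < h) (hx : x ∈ Icc a b) (hy : a ≤ y) (hyb : y + h ≤ b) :
    ENNReal.ofReal h * ‖deriv g x‖ₑ ≤ ‖g y‖ₑ + ‖g (y + h)‖ₑ +
      ENNReal.ofReal h * ∫⁻ r in Icc a b, ‖deriv (deriv g) r‖ₑ := by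
  have hyb_sub : Icc y (y + h) ⊆ Icc a b := Icc_subset_Icc hy hyb
  set φ : ℝ → F := fun r => g r - r • deriv g x
  have hφ : ContDiffOn ℝ 1 φ (Icc y (y + h)) :=
    ((hg.of_le (by norm_num)).mono (hyb_sub.trans hsub)).sub (by fun_prop)
  have hφ' : ∀ r ∈ Icc y (y + h), deriv φ r = deriv g r - deriv g x := fun r hr => by
    have hgr : DifferentiableAt ℝ g r :=
      (hg.differentiableOn (by norm_num)).differentiableAt (hs.mem_nhds (hsub (hyb_sub hr)))
    simpa using (hgr.hasDerivAt.fun_sub ((hasDerivAt_id r).smul_const (deriv g x))).deriv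
  have hφ_diff : ‖φ (y + h) - φ y‖ₑ ≤
      ENNReal.ofReal h * ∫⁻ r in Icc a b, ‖deriv (deriv g) r‖ₑ := by
    calc ‖φ (y + h) - φ y‖ₑ ≤ ∫⁻ r in Icc y (y + h), ‖deriv φ r‖ₑ :=
          enorm_sub_le_lintegral_deriv_of_contDiffOn_Icc hφ (by linarith)
      _ ≤ ∫⁻ _ in Icc y (y + h), ∫⁻ r in Icc a b, ‖deriv (deriv g) r‖ₑ := by
          refine setLIntegral_mono' measurableSet_Icc fun r hr => ?_
          rw [hφ' r hr]
          exact enorm_sub_le_setLIntegral_deriv ((hg.deriv_of_isOpen hs (by norm_num)).mono hsub)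
            (hyb_sub hr) hx
      _ = _ := by rw [setLIntegral_const, Real.volume_Icc, add_sub_cancel_left, mul_comm]
  have hdecomp : h • deriv g x = -g y + g (y + h) - (φ (y + h) - φ y) := by
    simp only [φ, add_smul]
    abel
  calc ENNReal.ofReal h * ‖deriv g x‖ₑ = ‖h • deriv g x‖ₑ := by
        rw [enorm_smul, Real.enorm_of_nonneg hh.le]
    _ ≤ ‖-g y‖ₑ + ‖g (y + h)‖ₑ + ‖φ (y + h) - φ y‖ₑ := by
        rw [hdecomp]
        exact enorm_sub_le.trans (by gcongr; exact enorm_add_le _ _)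
    _ ≤ _ := by
        rw [enorm_neg]
        gcongr

theorem enorm_deriv_le_setLIntegral_add {x : ℝ} (hs : IsOpen s) (hg : ContDiffOn ℝ 2 g s)
    (hsub : Icc a (a + 2 * h) ⊆ s) (hh : 0 < h) (hx : x ∈ Icc a (a + 2 * h)) :
    ‖deriv g x‖ₑ ≤ ENNReal.ofReal (h ^ 2)⁻¹ * (∫⁻ y in Icc a (a + 2 * h), ‖g y‖ₑ) +
      ∫⁻ y in Icc a (a + 2 * h), ‖deriv (deriv g) y‖ₑ := by
  set I := ∫⁻ y in Icc a (a + 2 * h), ‖g y‖ₑ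
  set K := ∫⁻ y in Icc a (a + 2 * h), ‖deriv (deriv g) y‖ₑ
  have hsplit : (∫⁻ y in Icc a (a + h), ‖g y‖ₑ) + ∫⁻ y in Icc a (a + h), ‖g (y + h)‖ₑ = I := by
    have hshift : ∫⁻ y in Icc a (a + h), ‖g (y + h)‖ₑ =
        ∫⁻ y in Icc (a + h) (a + 2 * h), ‖g y‖ₑ := by
      rw [(measurePreserving_add_right volume h).setLIntegral_comp_emb
        (measurableEmbedding_addRight h) (fun y => ‖g y‖ₑ), image_add_const_Icc, two_mul, add_assoc]
    rw [hshift, ← restrict_Ioc_eq_restrict_Icc, ← restrict_Ioc_eq_restrict_Icc,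
      ← lintegral_union measurableSet_Ioc (Ioc_disjoint_Ioc_of_le le_rfl),
      Ioc_union_Ioc_eq_Ioc (by linarith) (by linarith), restrict_Ioc_eq_restrict_Icc]
  have hg_meas : AEMeasurable (fun y => ‖g y‖ₑ) (volume.restrict (Icc a (a + h))) :=
    ((hg.continuousOn.mono ((Icc_subset_Icc_right (by linarith)).trans hsub)).aestronglyMeasurable
      measurableSet_Icc).enorm
  have haverage : ENNReal.ofReal (h ^ 2) * ‖deriv g x‖ₑ ≤ I + ENNReal.ofReal (h ^ 2) * K := by
    calc ENNReal.ofReal (h ^ 2) * ‖deriv g x‖ₑ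
        = ∫⁻ _ in Icc a (a + h), ENNReal.ofReal h * ‖deriv g x‖ₑ := by
          rw [setLIntegral_const, Real.volume_Icc, add_sub_cancel_left, sq, ofReal_mul hh.le]
          ring
      _ ≤ ∫⁻ y in Icc a (a + h), (‖g y‖ₑ + ‖g (y + h)‖ₑ + ENNReal.ofReal h * K) :=
          setLIntegral_mono' measurableSet_Icc fun y hy =>
            ofReal_mul_enorm_deriv_le hs hg hsub hh hx hy.1 (by linarith [hy.2])
      _ = I + ENNReal.ofReal (h ^ 2) * K := by
          rw [lintegral_add_right _ measurable_const, lintegral_add_left' hg_meas, hsplit,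
            setLIntegral_const, Real.volume_Icc, add_sub_cancel_left, sq, ofReal_mul hh.le]
          ring
  have hcancel : ENNReal.ofReal (h ^ 2)⁻¹ * ENNReal.ofReal (h ^ 2) = 1 := by
    rw [← ofReal_mul (by positivity), inv_mul_cancel₀ (by positivity), ofReal_one]
  calc ‖deriv g x‖ₑ = ENNReal.ofReal (h ^ 2)⁻¹ * (ENNReal.ofReal (h ^ 2) * ‖deriv g x‖ₑ) := by
        rw [← mul_assoc, hcancel, one_mul]
    _ ≤ ENNReal.ofReal (h ^ 2)⁻¹ * (I + ENNReal.ofReal (h ^ 2) * K) := by gcongr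
    _ = _ := by rw [mul_add, ← mul_assoc _ _ K, hcancel, one_mul]

end HalfLine

section HalfLineInterpolation

variable {F : Type*} [NormedAddCommGroup F] {p : ℝ≥0∞} {α : ℝ}

theorem exists_enorm_lt_of_eLpNorm_rpowMeasure_ne_top (hα : α ≤ -1) (hp : p ≠ 0) (hp_top : p ≠ ∞)
    {f : ℝ → F} (hf : AEStronglyMeasurable f (rpowMeasure α))
    (hfin : eLpNorm f p (rpowMeasure α) ≠ ∞) {x : ℝ} (hx : 0 < x) {c : ℝ≥0∞} (hc : c ≠ 0) :
    ∃ y ∈ Ioo 0 x, ‖f y‖ₑ < c := by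
  by_contra! hle
  have hlevel : rpowMeasure α {y | c ≤ ‖f y‖ₑ} = ∞ :=
    measure_mono_top hle (rpowMeasure_Ioo_zero_eq_top hα hx)
  have hMarkov := mul_meas_ge_le_pow_eLpNorm' (rpowMeasure α) hp hp_top hf c
  rw [hlevel, mul_top (rpow_pos_of_nonneg (pos_iff_ne_zero.2 hc) toReal_nonneg).ne', top_le_iff]
    at hMarkov
  exact rpow_ne_top_of_nonneg toReal_nonneg hfin hMarkov

theorem measurableSet_snd_mem_Icc_fst_add (a b : ℝ) :
    MeasurableSet {z : ℝ × ℝ | z.2 ∈ Icc (z.1 + a) (z.1 + b)} := by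
  simp only [mem_Icc, measurableSet_setOfPred]
  fun_prop

theorem eLpNorm_setLIntegral_Icc_le (hp : 1 ≤ p) (hp_top : p ≠ ∞) {c ℓ K : ℝ} (hK : 1 ≤ K)
    (hℓ : 0 ≤ ℓ)
    (hwindow : ∀ y > 0, rpowMeasure α (Icc (y - c - ℓ) (y - c)) ≤
      ENNReal.ofReal (K * ℓ) * ENNReal.ofReal (y ^ α))
    {f : ℝ → ℝ≥0∞} (hf : AEMeasurable f (volume.restrict (Ioi 0))) :
    eLpNorm (fun x => ∫⁻ y in Icc (x + c) (x + (c + ℓ)), f y ∂volume.restrict (Ioi 0)) p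
      (rpowMeasure α) ≤ ENNReal.ofReal (K * ℓ) * eLpNorm f p (rpowMeasure α) := by
  refine eLpNorm_setLIntegral_le (ν := volume.restrict (Ioi 0)) hp hp_top
    (measurableSet_snd_mem_Icc_fst_add c (c + ℓ)) hf (by fun_prop)
    (fun x => ?_) (ae_restrict_of_forall_mem measurableSet_Ioi fun y hy => ?_)
  · refine (Measure.restrict_apply_le _ _).trans ?_
    change volume (Icc (x + c) (x + (c + ℓ))) ≤ _
    rw [Real.volume_Icc, add_sub_add_left_eq_sub, add_sub_cancel_left]
    gcongr
    exact le_mul_of_one_le_left hℓ hK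
  · convert hwindow y hy using 2
    ext x
    simp only [mem_ofPred_eq, mem_Icc]
    constructor <;> rintro ⟨_, _⟩ <;> constructor <;> linarith

variable [NormedSpace ℝ F] {g : ℝ → F}

theorem enorm_deriv_le_setLIntegral_Ioc (hα : α ≤ -1) (hp : p ≠ 0) (hp_top : p ≠ ∞)
    (hg : ContDiffOn ℝ 2 g (Ioi 0)) (hfin : eLpNorm (deriv g) p (rpowMeasure α) ≠ ∞)
    {x : ℝ} (hx : 0 < x) :
    ‖deriv g x‖ₑ ≤ ∫⁻ y in Ioc 0 x, ‖deriv (deriv g) y‖ₑ := by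
  have hg' : ContDiffOn ℝ 1 (deriv g) (Ioi 0) := hg.deriv_of_isOpen isOpen_Ioi (by norm_num)
  have hmeas : AEStronglyMeasurable (deriv g) (rpowMeasure α) :=
    (hg'.continuousOn.aestronglyMeasurable measurableSet_Ioi).mono_ac
      rpowMeasure_absolutelyContinuous
  refine ENNReal.le_of_forall_pos_le_add fun c hc _ => ?_
  obtain ⟨y, hy, hyc⟩ := exists_enorm_lt_of_eLpNorm_rpowMeasure_ne_top hα hp hp_top hmeas hfin hx
    (ENNReal.coe_ne_zero.2 hc.ne')
  have hsub : Icc y x ⊆ Ioc 0 x := fun r hr => ⟨hy.1.trans_le hr.1, hr.2⟩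
  calc ‖deriv g x‖ₑ ≤ ‖deriv g x - deriv g y‖ₑ + ‖deriv g y‖ₑ := by
        simpa using enorm_add_le (deriv g x - deriv g y) (deriv g y)
    _ ≤ (∫⁻ y in Icc y x, ‖deriv (deriv g) y‖ₑ) + c := by
        gcongr
        exact enorm_sub_le_lintegral_deriv_of_contDiffOn_Icc
          (hg'.mono fun r hr => (hsub hr).1) hy.2.le
    _ ≤ (∫⁻ y in Ioc 0 x, ‖deriv (deriv g) y‖ₑ) + c := by gcongr

theorem eLpNorm_deriv_le_of_enorm_deriv_le (hp : 1 ≤ p) (hp_top : p ≠ ∞)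
    (hg : ContDiffOn ℝ 2 g (Ioi 0)) {c h K : ℝ} (hK : 1 ≤ K) (hh : 0 < h)
    (hwindow : ∀ y > 0, rpowMeasure α (Icc (y - c - 2 * h) (y - c)) ≤
      ENNReal.ofReal (K * (2 * h)) * ENNReal.ofReal (y ^ α))
    (hderiv : ∀ x > 0, ‖deriv g x‖ₑ ≤
      ENNReal.ofReal (h ^ 2)⁻¹ *
        (∫⁻ y in Icc (x + c) (x + (c + 2 * h)), ‖g y‖ₑ ∂volume.restrict (Ioi 0)) +
      ∫⁻ y in Icc (x + c) (x + (c + 2 * h)), ‖deriv (deriv g) y‖ₑ ∂volume.restrict (Ioi 0)) :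
    eLpNorm (deriv g) p (rpowMeasure α) ≤ ENNReal.ofReal (2 * K) *
      (ENNReal.ofReal h * eLpNorm (deriv (deriv g)) p (rpowMeasure α) +
        ENNReal.ofReal h⁻¹ * eLpNorm g p (rpowMeasure α)) := by
  have hg'' : ContDiffOn ℝ 0 (deriv (deriv g)) (Ioi 0) :=
    (hg.deriv_of_isOpen (m := 1) isOpen_Ioi (by norm_num)).deriv_of_isOpen isOpen_Ioi (by norm_num)
  set W : (ℝ → F) → ℝ → ℝ≥0∞ := fun f x =>
    ∫⁻ y in Icc (x + c) (x + (c + 2 * h)), ‖f y‖ₑ ∂volume.restrict (Ioi 0)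
  have hW_meas {f : ℝ → F} (hf : ContinuousOn f (Ioi 0)) : AEMeasurable (W f) (rpowMeasure α) :=
    aemeasurable_setLIntegral_section (measurableSet_snd_mem_Icc_fst_add c (c + 2 * h))
      (hf.aestronglyMeasurable measurableSet_Ioi).enorm
  have hW {f : ℝ → F} (hf : ContinuousOn f (Ioi 0)) : eLpNorm (W f) p (rpowMeasure α) ≤
      ENNReal.ofReal (K * (2 * h)) * eLpNorm f p (rpowMeasure α) := by
    rw [← eLpNorm_enorm f]
    exact eLpNorm_setLIntegral_Icc_le hp hp_top hK (by positivity) hwindow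
      (hf.aestronglyMeasurable measurableSet_Ioi).enorm
  calc eLpNorm (deriv g) p (rpowMeasure α)
      ≤ ENNReal.ofReal (h ^ 2)⁻¹ * eLpNorm (W g) p (rpowMeasure α) +
          1 * eLpNorm (W (deriv (deriv g))) p (rpowMeasure α) := by
        refine eLpNorm_le_mul_add_mul_of_ae_enorm_le hp
          (hW_meas hg.continuousOn).aestronglyMeasurable
          (hW_meas hg''.continuousOn).aestronglyMeasurable
          (ae_rpowMeasure_pos.mono fun x hx => ?_)
        rw [one_mul]
        exact hderiv x hx
    _ ≤ ENNReal.ofReal (h ^ 2)⁻¹ * (ENNReal.ofReal (K * (2 * h)) * eLpNorm g p (rpowMeasure α)) +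
          1 * (ENNReal.ofReal (K * (2 * h)) * eLpNorm (deriv (deriv g)) p (rpowMeasure α)) := by
        gcongr
        exacts [hW hg.continuousOn, hW hg''.continuousOn]
    _ = _ := by
        rw [show K * (2 * h) = 2 * K * h by ring, ofReal_mul (q := h) (by positivity)]
        have hcancel : ENNReal.ofReal (h ^ 2)⁻¹ * ENNReal.ofReal h = ENNReal.ofReal h⁻¹ := by
          rw [← ofReal_mul (by positivity)]
          congr 1
          field_simp
        rw [← hcancel]
        ring

theorem exists_eLpNorm_deriv_le (hp : 1 ≤ p) (hp_top : p ≠ ∞) (α : ℝ) :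
    ∃ C : ℝ≥0, ∀ h > 0, ∀ g : ℝ → F, ContDiffOn ℝ 2 g (Ioi 0) →
      eLpNorm (deriv g) p (rpowMeasure α) ≠ ∞ →
      eLpNorm (deriv g) p (rpowMeasure α) ≤
        C * (ENNReal.ofReal h * eLpNorm (deriv (deriv g)) p (rpowMeasure α) +
          ENNReal.ofReal h⁻¹ * eLpNorm g p (rpowMeasure α)) := by
  rcases lt_or_ge (-1) α with hα | hα
  · -- The window `[x, x + 2h]` points away from the boundary.
    refine ⟨(2 * max 1 (α + 1)⁻¹).toNNReal, fun h hh g hg _ => ?_⟩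
    refine eLpNorm_deriv_le_of_enorm_deriv_le (c := 0) hp hp_top hg (le_max_left _ _) hh
      (fun y hy => ?_) fun x hx => ?_
    · rw [sub_zero]
      exact rpowMeasure_Icc_left_le hα (by positivity) hy
    · have hsub : Icc x (x + 2 * h) ⊆ Ioi 0 := fun y hy => hx.trans_le hy.1
      rw [add_zero, zero_add, Measure.restrict_restrict_of_subset hsub]
      exact enorm_deriv_le_setLIntegral_add isOpen_Ioi hg hsub hh ⟨le_rfl, by linarith⟩
  · -- The window `[x - 2h, x] ∩ (0, ∞)` points towards the boundary, near which
    -- `deriv g` takes arbitrarily small values.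
    refine ⟨(2 * 1 : ℝ).toNNReal, fun h hh g hg hfin => ?_⟩
    refine eLpNorm_deriv_le_of_enorm_deriv_le (c := -(2 * h)) hp hp_top hg le_rfl hh
      (fun y hy => ?_) fun x hx => ?_
    · rw [one_mul, sub_neg_eq_add, add_sub_cancel_right]
      exact rpowMeasure_Icc_right_le (by linarith) hy
    · rw [neg_add_cancel, add_zero, Measure.restrict_restrict measurableSet_Icc]
      rcases lt_or_ge (2 * h) x with hhx | hhx
      · have hsub : Icc (x + -(2 * h)) x ⊆ Ioi 0 := fun y hy => mem_Ioi.2 (by linarith [hy.1])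
        rw [inter_eq_left.2 hsub]
        simpa using enorm_deriv_le_setLIntegral_add (a := x + -(2 * h)) isOpen_Ioi hg
          (by simpa using hsub) hh ⟨by linarith, by linarith⟩
      · refine le_add_left ((enorm_deriv_le_setLIntegral_Ioc hα (one_pos.trans_le hp).ne' hp_top hg
          hfin hx).trans (lintegral_mono_set fun y hy => ⟨⟨?_, hy.2⟩, hy.1⟩))
        linarith [hy.1]

end HalfLineInterpolation

section Fubini

variable {Q F : Type*} [MeasurableSpace Q] [NormedAddCommGroup F] [NormedSpace ℝ F] {p : ℝ≥0∞}

theorem exists_eLpNorm_deriv_prod_le (hp : 1 ≤ p) (hp_top : p ≠ ∞) (α : ℝ) (ν : Measure Q) :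
    ∃ C : ℝ≥0, ∀ h > 0, ∀ G : Q × ℝ → F, (∀ q, ContDiffOn ℝ 2 (fun r => G (q, r)) (Ioi 0)) →
      AEStronglyMeasurable G (ν.prod (rpowMeasure α)) →
      AEStronglyMeasurable (fun z => deriv (fun r => G (z.1, r)) z.2)
        (ν.prod (rpowMeasure α)) →
      AEStronglyMeasurable (fun z => deriv (deriv fun r => G (z.1, r)) z.2)
        (ν.prod (rpowMeasure α)) →
      eLpNorm (fun z => deriv (fun r => G (z.1, r)) z.2) p (ν.prod (rpowMeasure α)) ≠ ∞ →
      eLpNorm (fun z => deriv (fun r => G (z.1, r)) z.2) p (ν.prod (rpowMeasure α)) ≤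
        C * (ENNReal.ofReal h * eLpNorm (fun z => deriv (deriv fun r => G (z.1, r)) z.2) p
            (ν.prod (rpowMeasure α)) +
          ENNReal.ofReal h⁻¹ * eLpNorm G p (ν.prod (rpowMeasure α))) := by
  have hp0 : p ≠ 0 := (one_pos.trans_le hp).ne'
  obtain ⟨C, hC⟩ := exists_eLpNorm_deriv_le (F := F) hp hp_top α
  refine ⟨C, fun h hh G hG hG_meas hG'_meas hG''_meas hfin => ?_⟩
  have hslice := ae_eLpNorm_prodMk_left_ne_top hp0 hp_top hG'_meas hfin
  rw [eLpNorm_prod hp0 hp_top hG_meas, eLpNorm_prod hp0 hp_top hG'_meas,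
    eLpNorm_prod hp0 hp_top hG''_meas, mul_add, ← mul_assoc, ← mul_assoc]
  refine eLpNorm_le_mul_add_mul_of_ae_enorm_le hp
    (aemeasurable_eLpNorm_prodMk_left hp0 hp_top hG''_meas).aestronglyMeasurable
    (aemeasurable_eLpNorm_prodMk_left hp0 hp_top hG_meas).aestronglyMeasurable
    (hslice.mono fun q hq => ?_)
  simpa only [enorm_eq_self, mul_add, mul_assoc] using hC h hh _ (hG q) hq

end Fubini

section HalfSpace

section Shear

variable {T E : Type*} [MeasurableSpace T] [NormedAddCommGroup E] [NormedSpace ℝ E]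
  [MeasurableSpace E] [BorelSpace E] [SecondCountableTopology E]

theorem measurePreserving_mk_add_smul (τ : Measure T) [SFinite τ] (ρ : Measure ℝ) [SFinite ρ]
    (μ : Measure E) [SFinite μ] [μ.IsAddRightInvariant] (w : E) :
    MeasurePreserving (fun z : (T × E) × ℝ => (z.1.1, z.2, z.1.2 + z.2 • w))
      ((τ.prod μ).prod ρ) (τ.prod (ρ.prod μ)) := by
  have hskew : MeasurePreserving (fun x : ℝ × E => (x.1, x.2 + x.1 • w)) (ρ.prod μ) (ρ.prod μ) :=
    (MeasurePreserving.id ρ).skew_product (g := fun r y => y + r • w) (by fun_prop)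
      (.of_forall fun r => map_add_right_eq_self μ (r • w))
  exact ((MeasurePreserving.id τ).prod (hskew.comp Measure.measurePreserving_swap)).comp
    (measurePreserving_prodAssoc τ μ ρ)

end Shear

section Directions

variable {E F : Type*} [NormedAddCommGroup E] [NormedSpace ℝ E] [NormedAddCommGroup F]
  [NormedSpace ℝ F]

theorem span_fst_eq_one : Submodule.span ℝ {x : ℝ × E | x.1 = 1} = ⊤ := by
  refine Submodule.eq_top_iff'.2 fun x => ?_
  have hx : x = (1, x.2) + (x.1 - 1) • (1, 0) := by ext <;> simp
  rw [hx]
  exact add_mem (Submodule.subset_span rfl) (Submodule.smul_mem _ _ (Submodule.subset_span rfl))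

theorem exists_enorm_le_mul_sum_enorm_apply_one_mk [FiniteDimensional ℝ E] :
    ∃ (n : ℕ) (w : Fin n → E) (K : ℝ≥0), ∀ L : ℝ × E →L[ℝ] F,
      ‖L‖ₑ ≤ K * ∑ i, ‖L (1, w i)‖ₑ := by
  set b₀ := Module.Basis.ofSpan (span_fst_eq_one (E := E)).ge
  set b := b₀.reindex (b₀.indexEquiv (Module.finBasis ℝ (ℝ × E)))
  have hb (i) : (1, (b i).2) = b i := by
    have hmem : b i ∈ {x : ℝ × E | x.1 = 1} :=
      Module.Basis.ofSpan_subset _ (b₀.range_reindex _ ▸ mem_range_self i)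
    exact Prod.ext hmem.symm rfl
  obtain ⟨K, hK, hbound⟩ := b.exists_opNorm_le (F := F)
  refine ⟨_, fun i => (b i).2, K.toNNReal, fun L => ?_⟩
  have hL : ‖L‖ ≤ K * ∑ i, ‖L (b i)‖ := hbound (by positivity) fun i =>
    Finset.single_le_sum (f := fun i => ‖L (b i)‖) (fun _ _ => norm_nonneg _) (Finset.mem_univ i)
  simp only [hb, ← ofReal_norm]
  rw [← ofReal_sum_of_nonneg fun _ _ => norm_nonneg _, ← ENNReal.ofReal, ← ofReal_mul hK.le]
  exact ofReal_le_ofReal hL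

variable {f : ℝ × E → F} {w y : E} {r : ℝ}

theorem hasDerivAt_comp_mk_add_smul (hf : DifferentiableAt ℝ f (r, y + r • w)) :
    HasDerivAt (fun r => f (r, y + r • w)) (fderiv ℝ f (r, y + r • w) (1, w)) r := by
  have hline : HasDerivAt (fun r : ℝ => (r, y + r • w)) (1, w) r := by
    simpa using (hasDerivAt_id r).prodMk (((hasDerivAt_id r).smul_const w).const_add y)
  exact hf.hasFDerivAt.comp_hasDerivAt r hline

theorem deriv_comp_mk_add_smul (hf : ContDiffOn ℝ 2 f {x | 0 < x.1}) (hr : 0 < r) :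
    deriv (fun r => f (r, y + r • w)) r = fderiv ℝ f (r, y + r • w) (1, w) :=
  (hasDerivAt_comp_mk_add_smul ((hf.differentiableOn (by norm_num)).differentiableAt
    ((isOpen_lt continuous_const continuous_fst).mem_nhds hr))).deriv

theorem deriv_deriv_comp_mk_add_smul (hf : ContDiffOn ℝ 2 f {x | 0 < x.1}) (hr : 0 < r) :
    deriv (deriv fun r => f (r, y + r • w)) r =
      fderiv ℝ (fderiv ℝ f) (r, y + r • w) (1, w) (1, w) := by
  have hopen : IsOpen {x : ℝ × E | 0 < x.1} := isOpen_lt continuous_const continuous_fst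
  have hf' : DifferentiableAt ℝ (fderiv ℝ f) (r, y + r • w) :=
    ((hf.fderiv_of_isOpen (m := 1) hopen (by norm_num)).differentiableOn
      one_ne_zero).differentiableAt (hopen.mem_nhds hr)
  have hEqOn : EqOn (deriv fun r => f (r, y + r • w))
      (fun r => fderiv ℝ f (r, y + r • w) (1, w)) (Ioi 0) :=
    fun _ hr => deriv_comp_mk_add_smul hf hr
  rw [hEqOn.deriv isOpen_Ioi hr]
  simpa using ((hasDerivAt_comp_mk_add_smul hf').clm_apply (hasDerivAt_const r ((1 : ℝ), w))).deriv

end Directions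

variable {T E F : Type*} [MeasurableSpace T] [NormedAddCommGroup E] [NormedSpace ℝ E]
  [MeasurableSpace E] [BorelSpace E] [NormedAddCommGroup F] [NormedSpace ℝ F] {p : ℝ≥0∞}

/-- The partial Fréchet derivative of `u : T × V → F` in the second variable; `sGrad` and `sHess`
are its first and second iterates. -/
def fderivSnd {T V F : Type*} [NormedAddCommGroup V] [NormedSpace ℝ V] [NormedAddCommGroup F]
    [NormedSpace ℝ F] (u : T × V → F) (z : T × V) : V →L[ℝ] F :=
  fderiv ℝ (fun x => u (z.1, x)) z.2

/-- The measure `r ^ α dt dr dy` on `T × (0, ∞) × E`, as a measure on `T × ℝ × E`. -/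
def halfSpaceMeasure (τ : Measure T) (α : ℝ) (μ : Measure E) : Measure (T × ℝ × E) :=
  τ.prod ((rpowMeasure α).prod μ)

theorem exists_eLpNorm_fderivSnd_apply_le_apply_apply [SecondCountableTopology E] (hp : 1 ≤ p)
    (hp_top : p ≠ ∞) (τ : Measure T) [SFinite τ] (α : ℝ) (μ : Measure E) [SFinite μ]
    [μ.IsAddRightInvariant] (w : E) :
    ∃ C : ℝ≥0, ∀ h > 0, ∀ u : T × ℝ × E → F,
      (∀ t, ContDiffOn ℝ 2 (fun x => u (t, x)) {x | 0 < x.1}) →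
      AEStronglyMeasurable u (halfSpaceMeasure τ α μ) →
      AEStronglyMeasurable (fun z => fderivSnd u z (1, w)) (halfSpaceMeasure τ α μ) →
      AEStronglyMeasurable (fun z => fderivSnd (fderivSnd u) z (1, w) (1, w))
        (halfSpaceMeasure τ α μ) →
      eLpNorm (fun z => fderivSnd u z (1, w)) p (halfSpaceMeasure τ α μ) ≠ ∞ →
      eLpNorm (fun z => fderivSnd u z (1, w)) p (halfSpaceMeasure τ α μ) ≤
        C * (ENNReal.ofReal h * eLpNorm (fun z => fderivSnd (fderivSnd u) z (1, w) (1, w)) p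
            (halfSpaceMeasure τ α μ) +
          ENNReal.ofReal h⁻¹ * eLpNorm u p (halfSpaceMeasure τ α μ)) := by
  obtain ⟨C, hC⟩ := exists_eLpNorm_deriv_prod_le (F := F) hp hp_top α (τ.prod μ)
  refine ⟨C, fun h hh u hu hu_meas hu'_meas hu''_meas hfin => ?_⟩
  have hline := measurePreserving_mk_add_smul τ (rpowMeasure α) μ w
  set line : (T × E) × ℝ → T × ℝ × E := fun z => (z.1.1, z.2, z.1.2 + z.2 • w)
  have hslice (q : T × E) : ContDiffOn ℝ 2 (fun r => (u ∘ line) (q, r)) (Ioi 0) :=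
    (hu q.1).comp (f := fun r : ℝ => (r, q.2 + r • w)) (by fun_prop) fun r hr => hr
  have hpos : ∀ᵐ z ∂(τ.prod μ).prod (rpowMeasure α), 0 < z.2 :=
    Measure.quasiMeasurePreserving_snd.ae ae_rpowMeasure_pos
  have hderiv : (fun z => deriv (fun r => (u ∘ line) (z.1, r)) z.2)
      =ᵐ[(τ.prod μ).prod (rpowMeasure α)] (fun z => fderivSnd u z (1, w)) ∘ line :=
    hpos.mono fun z hz => deriv_comp_mk_add_smul (y := z.1.2) (hu z.1.1) hz
  have hderiv₂ : (fun z => deriv (deriv fun r => (u ∘ line) (z.1, r)) z.2)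
      =ᵐ[(τ.prod μ).prod (rpowMeasure α)]
        (fun z => fderivSnd (fderivSnd u) z (1, w) (1, w)) ∘ line :=
    hpos.mono fun z hz => deriv_deriv_comp_mk_add_smul (y := z.1.2) (hu z.1.1) hz
  have hinterp := hC h hh (u ∘ line) hslice (hu_meas.comp_measurePreserving hline)
    ((hu'_meas.comp_measurePreserving hline).congr hderiv.symm)
    ((hu''_meas.comp_measurePreserving hline).congr hderiv₂.symm)
  rw [eLpNorm_congr_ae hderiv, eLpNorm_congr_ae hderiv₂,
    eLpNorm_comp_measurePreserving hu'_meas hline, eLpNorm_comp_measurePreserving hu''_meas hline,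
    eLpNorm_comp_measurePreserving hu_meas hline] at hinterp
  exact hinterp hfin

theorem enorm_apply_apply_le {V : Type*} [NormedAddCommGroup V] [NormedSpace ℝ V]
    (B : V →L[ℝ] V →L[ℝ] F) (v : V) : ‖B v v‖ₑ ≤ ‖v‖ₑ ^ 2 * ‖B‖ₑ := by
  calc ‖B v v‖ₑ ≤ ‖B‖ₑ * ‖v‖ₑ * ‖v‖ₑ :=
        (ContinuousLinearMap.le_opENorm _ _).trans (by gcongr; exact B.le_opENorm v)
    _ = ‖v‖ₑ ^ 2 * ‖B‖ₑ := by ring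

theorem exists_eLpNorm_fderivSnd_apply_le [SecondCountableTopology E] (hp : 1 ≤ p)
    (hp_top : p ≠ ∞) (τ : Measure T) [SFinite τ] (α : ℝ) (μ : Measure E) [SFinite μ]
    [μ.IsAddRightInvariant] (w : E) :
    ∃ C : ℝ≥0, ∀ h > 0, ∀ u : T × ℝ × E → F,
      (∀ t, ContDiffOn ℝ 2 (fun x => u (t, x)) {x | 0 < x.1}) →
      AEStronglyMeasurable u (halfSpaceMeasure τ α μ) →
      AEStronglyMeasurable (fderivSnd u) (halfSpaceMeasure τ α μ) →
      AEStronglyMeasurable (fderivSnd (fderivSnd u)) (halfSpaceMeasure τ α μ) →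
      eLpNorm (fderivSnd u) p (halfSpaceMeasure τ α μ) ≠ ∞ →
      eLpNorm (fun z => fderivSnd u z (1, w)) p (halfSpaceMeasure τ α μ) ≤
        C * (ENNReal.ofReal h * eLpNorm (fderivSnd (fderivSnd u)) p (halfSpaceMeasure τ α μ) +
          ENNReal.ofReal h⁻¹ * eLpNorm u p (halfSpaceMeasure τ α μ)) := by
  obtain ⟨C, hC⟩ := exists_eLpNorm_fderivSnd_apply_le_apply_apply (F := F) hp hp_top τ α μ w
  set e : ℝ × E := (1, w)
  set m := halfSpaceMeasure τ α μ
  set M : ℝ≥0 := max 1 (‖e‖₊ ^ 2)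
  refine ⟨C * M, fun h hh u hu hu_meas hu'_meas hu''_meas hfin => ?_⟩
  have hDe_fin : eLpNorm (fun z => fderivSnd u z e) p m ≠ ∞ := by
    have hle : eLpNorm (fun z => fderivSnd u z e) p m ≤ ‖e‖ₑ * eLpNorm (fderivSnd u) p m :=
      eLpNorm_le_mul_eLpNorm_of_ae_le_mul'' p hu'_meas (.of_forall fun z =>
        ((fderivSnd u z).le_opENorm e).trans_eq (mul_comm _ _))
    exact ne_top_of_le_ne_top (mul_ne_top enorm_ne_top hfin) hle
  have hM : (1 : ℝ≥0∞) ≤ M := mod_cast le_max_left _ _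
  have heM : ‖e‖ₑ ^ 2 ≤ M := by
    rw [enorm_eq_nnnorm, ← ENNReal.coe_pow]
    exact ENNReal.coe_le_coe.2 (le_max_right _ _)
  have hDDe : eLpNorm (fun z => fderivSnd (fderivSnd u) z e e) p m ≤
      M * eLpNorm (fderivSnd (fderivSnd u)) p m :=
    eLpNorm_le_mul_eLpNorm_of_ae_le_mul'' p hu''_meas (.of_forall fun z =>
      (enorm_apply_apply_le _ _).trans (by gcongr))
  calc eLpNorm (fun z => fderivSnd u z e) p m
      ≤ C * (ENNReal.ofReal h * eLpNorm (fun z => fderivSnd (fderivSnd u) z e e) p m +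
          ENNReal.ofReal h⁻¹ * eLpNorm u p m) :=
        hC h hh u hu hu_meas (hu'_meas.apply_continuousLinearMap e)
          ((hu''_meas.apply_continuousLinearMap e).apply_continuousLinearMap e) hDe_fin
    _ ≤ C * (ENNReal.ofReal h * (M * eLpNorm (fderivSnd (fderivSnd u)) p m) +
          ENNReal.ofReal h⁻¹ * (M * eLpNorm u p m)) := by
        gcongr
        exact le_mul_of_one_le_left' hM
    _ = _ := by
        push_cast
        ring

theorem exists_eLpNorm_fderivSnd_le [FiniteDimensional ℝ E] (hp : 1 ≤ p) (hp_top : p ≠ ∞)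
    (τ : Measure T) [SFinite τ] (α : ℝ) (μ : Measure E) [SFinite μ] [μ.IsAddRightInvariant] :
    ∃ C : ℝ≥0, ∀ h > 0, ∀ u : T × ℝ × E → F,
      (∀ t, ContDiffOn ℝ 2 (fun x => u (t, x)) {x | 0 < x.1}) →
      AEStronglyMeasurable u (halfSpaceMeasure τ α μ) →
      AEStronglyMeasurable (fderivSnd u) (halfSpaceMeasure τ α μ) →
      AEStronglyMeasurable (fderivSnd (fderivSnd u)) (halfSpaceMeasure τ α μ) →
      eLpNorm (fderivSnd u) p (halfSpaceMeasure τ α μ) ≠ ∞ →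
      eLpNorm (fderivSnd u) p (halfSpaceMeasure τ α μ) ≤
        C * (ENNReal.ofReal h * eLpNorm (fderivSnd (fderivSnd u)) p (halfSpaceMeasure τ α μ) +
          ENNReal.ofReal h⁻¹ * eLpNorm u p (halfSpaceMeasure τ α μ)) := by
  obtain ⟨n, w, K, hK⟩ := exists_enorm_le_mul_sum_enorm_apply_one_mk (E := E) (F := F)
  choose C hC using fun i => exists_eLpNorm_fderivSnd_apply_le (F := F) hp hp_top τ α μ (w i)
  refine ⟨K * ∑ i, C i, fun h hh u hu hu_meas hu'_meas hu''_meas hfin => ?_⟩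
  set m := halfSpaceMeasure τ α μ
  calc eLpNorm (fderivSnd u) p m ≤ K * ∑ i, eLpNorm (fun z => fderivSnd u z (1, w i)) p m :=
        eLpNorm_le_mul_sum_of_ae_enorm_le hp (fun i _ => hu'_meas.apply_continuousLinearMap _)
          (.of_forall fun z => hK (fderivSnd u z))
    _ ≤ K * ∑ i, C i * (ENNReal.ofReal h * eLpNorm (fderivSnd (fderivSnd u)) p m +
          ENNReal.ofReal h⁻¹ * eLpNorm u p m) :=
        mul_le_mul_right (Finset.sum_le_sum fun i _ =>
          hC i h hh u hu hu_meas hu'_meas hu''_meas hfin) _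
    _ = _ := by
        rw [← Finset.sum_mul, ← mul_assoc]
        push_cast
        rfl

end HalfSpace

theorem halfSpaceMeasure_eq_withDensity {T E : Type*} [MeasurableSpace T] [MeasurableSpace E]
    (τ : Measure T) [SFinite τ] (α : ℝ) (μ : Measure E) [SFinite μ] :
    halfSpaceMeasure τ α μ = ((τ.prod (volume.prod μ)).restrict {z | 0 < z.2.1}).withDensity
      fun z => ENNReal.ofReal (z.2.1 ^ α) := by
  have hhalf : {z : T × ℝ × E | 0 < z.2.1} = univ ×ˢ (Ioi 0 ×ˢ univ) := by
    ext z
    simp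
  rw [halfSpaceMeasure, rpowMeasure, prod_withDensity_left (by fun_prop),
    prod_withDensity_right (by fun_prop), hhalf, ← Measure.prod_restrict, ← Measure.prod_restrict,
    Measure.restrict_univ, Measure.restrict_univ]

theorem wNorm_norm_eq_eLpNorm {G : Type*} [NormedAddCommGroup G] {p : ℝ} (hp : 0 < p) (θ : ℝ)
    (v : ℝ × ℝ × EuclideanSpace ℝ (Fin (d - 1)) → G) :
    wNorm d p θ (fun z => ‖v z‖) =
      eLpNorm v (ENNReal.ofReal p) (halfSpaceMeasure volume (θ - d) volume) := by
  rw [eLpNorm_eq_lintegral_rpow_enorm_toReal (ofReal_pos.2 hp).ne' ofReal_ne_top,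
    toReal_ofReal hp.le, halfSpaceMeasure_eq_withDensity,
    lintegral_withDensity_eq_lintegral_mul_non_measurable _ (by fun_prop) (by simp), wNorm]
  congr 1
  refine setLIntegral_congr_fun (measurableSet_lt measurable_const (by fun_prop)) fun z _ => ?_
  rw [ofReal_mul (by positivity), Pi.mul_apply, mul_comm, ← ofReal_norm,
    ofReal_rpow_of_nonneg (norm_nonneg _) hp.le]

theorem aestronglyMeasurable_halfSpaceMeasure {T E G : Type*} [TopologicalSpace T]
    [SecondCountableTopology T] [MeasurableSpace T] [BorelSpace T] [TopologicalSpace E]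
    [SecondCountableTopology E] [MeasurableSpace E] [BorelSpace E] [TopologicalSpace G]
    [TopologicalSpace.PseudoMetrizableSpace G] (τ : Measure T) [SFinite τ] (α : ℝ)
    (μ : Measure E) [SFinite μ] {v : T × ℝ × E → G} (hv : ContinuousOn v {z | 0 < z.2.1}) :
    AEStronglyMeasurable v (halfSpaceMeasure τ α μ) := by
  rw [halfSpaceMeasure_eq_withDensity]
  exact (hv.aestronglyMeasurable (measurableSet_lt measurable_const (by fun_prop))).mono_ac
    (withDensity_absolutelyContinuous _ _)

theorem contDiffOn_fderivSnd {V W F : Type*} [NormedAddCommGroup V] [NormedSpace ℝ V]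
    [NormedAddCommGroup W] [NormedSpace ℝ W] [NormedAddCommGroup F] [NormedSpace ℝ F]
    {u : V × W → F} {s : Set (V × W)} {m n : WithTop ℕ∞} (hs : IsOpen s)
    (hu : ContDiffOn ℝ n u s) (hmn : m + 1 ≤ n) : ContDiffOn ℝ m (fderivSnd u) s := by
  refine ((hu.fderiv_of_isOpen hs hmn).clm_comp
    (contDiffOn_const (c := ContinuousLinearMap.inr ℝ V W))).congr fun z hz => ?_
  have hdiff : DifferentiableAt ℝ u z :=
    (hu.differentiableOn (by rintro rfl; simp at hmn)).differentiableAt (hs.mem_nhds hz)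
  exact (hdiff.hasFDerivAt.comp z.2 (hasFDerivAt_prodMk_right z.1 z.2)).fderiv

theorem ofReal_sqrt_mul_le_of_le_mul_inv_sqrt {a b c C : ℝ≥0∞} {lam : ℝ} (hlam : 0 < lam)
    (h : b ≤ C * (ENNReal.ofReal (√lam)⁻¹ * c + ENNReal.ofReal (√lam)⁻¹⁻¹ * a)) :
    ENNReal.ofReal √lam * b ≤ C * (c + ENNReal.ofReal lam * a) := by
  have hcancel : ENNReal.ofReal √lam * ENNReal.ofReal (√lam)⁻¹ = 1 := by
    rw [← ofReal_mul (by positivity), mul_inv_cancel₀ (by positivity), ofReal_one]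
  have hsq : ENNReal.ofReal √lam * ENNReal.ofReal √lam = ENNReal.ofReal lam := by
    rw [← ofReal_mul (by positivity), Real.mul_self_sqrt hlam.le]
  calc ENNReal.ofReal √lam * b
      ≤ ENNReal.ofReal √lam *
          (C * (ENNReal.ofReal (√lam)⁻¹ * c + ENNReal.ofReal (√lam)⁻¹⁻¹ * a)) := by gcongr
    _ = C * (c + ENNReal.ofReal lam * a) := by
        rw [inv_inv, mul_left_comm, mul_add, ← mul_assoc, ← mul_assoc, hcancel, hsq, one_mul]

theorem stmt_6_general (p θ : ℝ) (hp : 1 ≤ p) :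
    ∃ C : ℝ, 0 < C ∧ ∀ (lam : ℝ), 0 < lam →
      ∀ (u : ℝ × ℝ × EuclideanSpace ℝ (Fin (d - 1)) → ℝ), ContDiffOn ℝ 2 u (hSp d) →
        wNorm d p θ (fun z => ‖sGrad d u z‖) ≠ ⊤ →
        ENNReal.ofReal (Real.sqrt lam) * wNorm d p θ (fun z => ‖sGrad d u z‖) ≤
          ENNReal.ofReal C * wNorm d p θ (fun z => ‖sHess d u z‖) +
            ENNReal.ofReal (C * lam) * wNorm d p θ (fun z => |u z|) := by
  have hp0 : 0 < p := by linarith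
  obtain ⟨C, hC⟩ := exists_eLpNorm_fderivSnd_le (F := ℝ) (one_le_ofReal.2 hp) ofReal_ne_top
    (volume : Measure ℝ) (θ - d) (volume : Measure (EuclideanSpace ℝ (Fin (d - 1))))
  refine ⟨C + 1, by positivity, fun lam hlam u hu hDu_fin => ?_⟩
  have hDu : ContDiffOn ℝ 1 (sGrad d u) (hSp d) :=
    contDiffOn_fderivSnd (isOpen_lt continuous_const (by fun_prop)) hu (by norm_num)
  have hDDu : ContDiffOn ℝ 0 (sHess d u) (hSp d) :=
    contDiffOn_fderivSnd (isOpen_lt continuous_const (by fun_prop)) hDu (by norm_num)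
  have hu_norm := wNorm_norm_eq_eLpNorm d hp0 θ u
  have hDu_norm := wNorm_norm_eq_eLpNorm d hp0 θ (fderivSnd u)
  have hDDu_norm := wNorm_norm_eq_eLpNorm d hp0 θ (fderivSnd (fderivSnd u))
  have hinterp := ofReal_sqrt_mul_le_of_le_mul_inv_sqrt hlam <| hC (√lam)⁻¹ (by positivity) u
    (fun t => hu.comp (f := fun x => (t, x)) (by fun_prop) fun x hx => hx)
    (aestronglyMeasurable_halfSpaceMeasure _ _ _ hu.continuousOn)
    (aestronglyMeasurable_halfSpaceMeasure _ _ _ hDu.continuousOn)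
    (aestronglyMeasurable_halfSpaceMeasure _ _ _ hDDu.continuousOn) (hDu_norm ▸ hDu_fin)
  rw [← hu_norm, ← hDu_norm, ← hDDu_norm] at hinterp
  have hC_le : (C : ℝ≥0∞) ≤ ENNReal.ofReal (C + 1) := by
    rw [← ofReal_coe_nnreal]
    exact ofReal_le_ofReal (by linarith)
  rw [ofReal_mul (by positivity), mul_assoc, ← mul_add]
  exact hinterp.trans (mul_le_mul_left hC_le _)

/-- Interpolation inequality in weighted `L_p` on the half space: for `p ∈ (1,∞)`,
`θ ∈ ℝ`, `λ > 0`, and any `u` with `u, Du, D²u` in weighted `L_p`,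
`√λ ‖Du‖_{p,θ} ≤ C ‖D²u‖_{p,θ} + C λ ‖u‖_{p,θ}` with `C = C(d,p,θ)`. -/
theorem stmt_6 (hd : 1 ≤ d) (p θ : ℝ) (hp : 1 < p) :
    ∃ C : ℝ, 0 < C ∧ ∀ (lam : ℝ), 0 < lam →
      ∀ (u : ℝ × ℝ × EuclideanSpace ℝ (Fin (d - 1)) → ℝ), ContDiff ℝ (⊤ : ℕ∞) u →
        wNorm d p θ (fun z => |u z|) ≠ ⊤ →
        wNorm d p θ (fun z => ‖sGrad d u z‖) ≠ ⊤ →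
        wNorm d p θ (fun z => ‖sHess d u z‖) ≠ ⊤ →
        ENNReal.ofReal (Real.sqrt lam) * wNorm d p θ (fun z => ‖sGrad d u z‖) ≤
          ENNReal.ofReal C * wNorm d p θ (fun z => ‖sHess d u z‖) +
            ENNReal.ofReal (C * lam) * wNorm d p θ (fun z => |u z|) := by
  obtain ⟨C, hC, hbound⟩ := stmt_6_general d p θ hp.le
  exact ⟨C, hC, fun lam hlam u hu _ hDu _ =>
    hbound lam hlam u (contDiff_infty.1 hu 2).contDiffOn hDu⟩

end
end
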